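/- arXiv:1210.2700 — 2 statements merged into one kernel-verified Lean document; each statement's English description precedes it below -/
import Mathlib

section
/- Let α : k → k be a separable field endomorphism, and let K be the direct limit of the directed system k →α k →α ⋯ with structure map β : k → K (the map from the first copy of k). Then the field extension β : k → K is separable. -/
/-- A field homomorphism `β : k → K` is *separable* if every intermediate field that is
finitely generated over `k` is separably generated over `k`, i.e. it admits a transcendence
basis `s` such that the extension over `k(s)` is separable algebraic. -/
def RingHom.IsSeparableFieldHom {k K : Type u} [Field k] [Field K] (β : k →+* K) : Prop :=
  letI : Algebra k K := β.toAlgebra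
  ∀ F : IntermediateField k K, F.FG →
    ∃ s : Set F, AlgebraicIndependent k ((↑) : s → F) ∧
      Algebra.IsSeparable (↥(IntermediateField.adjoin k (s : Set (↥F)))) (↥F)


/-- `p`-independence of elements of `k` is preserved by `f`. -/
def PSep (p : ℕ) {k K : Type*} [Field k] [Field K] (f : k →+* K) : Prop :=
  ∀ (n : ℕ) (c : Fin n → k), (∀ b : Fin n → k, ∑ j, c j * b j ^ p = 0 → b = 0) →
    ∀ y : Fin n → K, ∑ j, f (c j) * y j ^ p = 0 → y = 0

theorem PSep.comp {p : ℕ} {k L K : Type*} [Field k] [Field L] [Field K] {g : L →+* K} {f : k →+* L}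
    (hg : PSep p g) (hf : PSep p f) : PSep p (g.comp f) :=
  fun n c hc => hg n (f ∘ c) (hf n c hc)

theorem PSep.of_isSeparable (p : ℕ) {k K : Type*} [Field k] [Field K] [Algebra k K] [ExpChar k p]
    [Algebra.IsSeparable k K] : PSep p (algebraMap k K) := by
  intro n c hc y hy
  have : ExpChar K p := expChar_of_injective_algebraMap (algebraMap k K).injective p
  let s := Module.Basis.ofVectorSpace k K
  have hs := s.linearIndependent.map_pow_expChar_pow_of_isSeparable p 1
  simp only [pow_one] at hs
  classical
  let T : Finset _ := Finset.univ.biUnion fun j => (s.repr (y j)).support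
  have hyj : ∀ j, y j = ∑ i ∈ T, s.repr (y j) i • s i := by
    intro j
    conv_lhs => rw [← s.linearCombination_repr (y j)]
    rw [Finsupp.linearCombination_apply]
    apply Finsupp.sum_of_support_subset
    · exact Finset.subset_biUnion_of_mem (fun j => (s.repr (y j)).support) (Finset.mem_univ j)
    · simp
  have h2 : ∑ i ∈ T, (∑ j, c j * s.repr (y j) i ^ p) • (s i) ^ p = 0 := by
    rw [← hy]
    simp only [Finset.sum_smul]
    rw [Finset.sum_comm]
    refine Finset.sum_congr rfl fun j _ => ?_
    conv_rhs => rw [hyj j]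
    have hf := map_sum (frobenius K p) (fun i => s.repr (y j) i • s i) T
    simp only [frobenius_def] at hf
    rw [hf, Finset.mul_sum]
    refine Finset.sum_congr rfl fun i _ => ?_
    simp only [Algebra.smul_def, map_mul, map_pow, mul_pow]
    ring
  rw [linearIndependent_iff'] at hs
  have h3 := hs T _ h2
  funext j
  rw [hyj j]
  refine Finset.sum_eq_zero fun i hi => ?_
  rw [congrFun (hc (fun j => s.repr (y j) i) (h3 i hi)) j]
  simp

open scoped IntermediateField.algebraAdjoinAdjoin in
theorem PSep.of_algebraicIndependent (p : ℕ) {k K : Type*} [Field k] [Field K] [Algebra k K]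
    [ExpChar k p] (s : Set K) (hs : AlgebraicIndependent k ((↑) : s → K)) :
    PSep p (algebraMap k (IntermediateField.adjoin k s)) := by
  intro n c hc y hy
  classical
  have hp : p ≠ 0 := (expChar_pos k p).ne'
  have : ExpChar (MvPolynomial s k) p :=
    expChar_of_injective_algebraMap (FaithfulSMul.algebraMap_injective k _) p
  obtain ⟨d, hd⟩ := IsLocalization.exist_integer_multiples_of_finset
    (nonZeroDivisors (Algebra.adjoin k s)) (Finset.univ.image y)
  have h1 : ∀ j, ∃ q : MvPolynomial s k,
      MvPolynomial.aeval ((↑) : s → K) q = (d : K) * (y j : K) := by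
    intro j
    obtain ⟨z, hz⟩ := hd (y j) (Finset.mem_image_of_mem _ (Finset.mem_univ j))
    have hz' : (z : K) = (d : K) * (y j : K) := congrArg Subtype.val hz
    have : (z : K) ∈ Algebra.adjoin k (Set.range ((↑) : s → K)) := by
      rw [Subtype.range_coe]; exact z.2
    rw [Algebra.adjoin_range_eq_range_aeval] at this
    obtain ⟨q, hq⟩ := this
    exact ⟨q, hq.trans hz'⟩
  choose q hq using h1
  have h2 : ∑ j, MvPolynomial.C (c j) * q j ^ p = 0 := by
    apply hs
    simp only [map_sum, map_mul, map_pow, hq, map_zero, MvPolynomial.aeval_C]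
    have := congrArg (fun x : IntermediateField.adjoin k s => (d : K) ^ p * (x : K)) hy
    simp only [ZeroMemClass.coe_zero, mul_zero] at this
    rw [← this]
    simp only [AddSubmonoidClass.coe_finsetSum, Finset.mul_sum]
    refine Finset.sum_congr rfl fun j _ => ?_
    push_cast
    rw [mul_pow]
    change algebraMap k K (c j) * _ = _ * (algebraMap k K (c j) * _)
    ring
  have h3 : ∀ m j, MvPolynomial.coeff m (q j) = 0 := by
    intro m
    refine congrFun (hc (fun j => (q j).coeff m) ?_)
    have := congrArg (MvPolynomial.coeff (p • m)) h2
    simp only [MvPolynomial.coeff_sum, MvPolynomial.coeff_C_mul, MvPolynomial.coeff_zero] at this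
    rw [← this]
    refine Finset.sum_congr rfl fun j _ => ?_
    congr 1
    rw [← MvPolynomial.map_frobenius_expand p, MvPolynomial.coeff_map,
      MvPolynomial.coeff_expand_smul p hp, frobenius_def]
  funext j
  have hq0 : q j = 0 := by ext m; simp [h3]
  have := hq j
  rw [hq0, map_zero] at this
  have hd0 : (d : K) ≠ 0 := by
    have := nonZeroDivisors.ne_zero d.2
    simpa using this
  have := (mul_eq_zero.1 this.symm).resolve_left hd0
  exact Subtype.ext this

theorem PSep.of_forall (p : ℕ) {k K : Type*} [Field k] [Field K] [Algebra k K]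
    [ExpChar k p] (h : ∀ F : IntermediateField k K, F.FG →
    ∃ s : Set F, AlgebraicIndependent k ((↑) : s → F) ∧
      Algebra.IsSeparable (↥(IntermediateField.adjoin k (s : Set (↥F)))) (↥F)) :
    PSep p (algebraMap k K) := by
  intro n c hc y hy
  obtain ⟨s, hs, hsep⟩ := h (IntermediateField.adjoin k (Set.range y))
    (IntermediateField.fg_adjoin_of_finite (Set.finite_range y))
  have : ExpChar (IntermediateField.adjoin k s) p :=
    expChar_of_injective_algebraMap (algebraMap k _).injective p
  have h1 := (PSep.of_isSeparable p (k := IntermediateField.adjoin k s)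
    (K := IntermediateField.adjoin k (Set.range y))).comp (PSep.of_algebraicIndependent p s hs)
  have h2 := h1 n c hc (fun j => ⟨y j, IntermediateField.subset_adjoin _ _ ⟨j, rfl⟩⟩) (by
    apply Subtype.ext
    rw [AddSubmonoidClass.coe_finsetSum]
    exact hy)
  funext j
  exact congrArg Subtype.val (congrFun h2 j)

theorem PSep.linearIndependent {p : ℕ} {k K : Type*} [Field k] [Field K] [Algebra k K]
    [ExpChar k p] (h : PSep p (algebraMap k K)) (s : Finset K)
    (hs : LinearIndepOn k _root_.id (s : Set K)) : LinearIndepOn k (· ^ p) (s : Set K) := by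
  have : ExpChar K p := expChar_of_injective_algebraMap (algebraMap k K).injective p
  have hp : p ≠ 0 := (expChar_pos k p).ne'
  classical
  rw [linearIndepOn_finset_iff] at hs ⊢
  intro a ha
  let kp := (frobenius k p).fieldRange
  let V : Submodule kp k := Submodule.span kp (a '' s)
  have : FiniteDimensional kp V := FiniteDimensional.span_of_finite kp (s.finite_toSet.image a)
  let c := Module.finBasis kp V
  have hr : ∀ x : kp, ∃ b : k, b ^ p = x := fun x => x.2
  choose rt hrt using hr
  have hmem : ∀ i : s, a i ∈ V := fun i => Submodule.subset_span ⟨i, i.2, rfl⟩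
  have hsum : ∀ i : s, a i = ∑ j, (c j : k) * rt (c.repr ⟨a i, hmem i⟩ j) ^ p := by
    intro i
    have := congrArg Subtype.val (c.sum_repr ⟨a i, hmem i⟩)
    rw [AddSubmonoidClass.coe_finsetSum] at this
    refine Eq.trans this.symm (Finset.sum_congr rfl fun j _ => ?_)
    rw [hrt, mul_comm]
    rfl
  have hc : ∀ b : Fin _ → k, ∑ j, (c j : k) * b j ^ p = 0 → b = 0 := by
    intro b hb
    have hli := Fintype.linearIndependent_iff.1 c.linearIndependent
      (fun j => ⟨b j ^ p, b j, rfl⟩) (by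
        apply Subtype.ext
        rw [AddSubmonoidClass.coe_finsetSum]
        refine Eq.trans (Finset.sum_congr rfl fun j _ => ?_) hb
        rw [mul_comm]; rfl)
    funext j
    exact eq_zero_of_pow_eq_zero (congrArg Subtype.val (hli j))
  have h1 := h _ (fun j => (c j : k)) hc
    (fun j => ∑ i : s, algebraMap k K (rt (c.repr ⟨a i, hmem i⟩ j)) * i) (by
      rw [← ha, ← Finset.sum_coe_sort s]
      have e1 : ∀ j, (∑ i : s, algebraMap k K (rt (c.repr ⟨a i, hmem i⟩ j)) * (i : K)) ^ p =
          ∑ i : s, algebraMap k K (rt (c.repr ⟨a i, hmem i⟩ j)) ^ p * (i : K) ^ p := by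
        intro j
        have hf := map_sum (frobenius K p)
          (fun i : s => algebraMap k K (rt (c.repr ⟨a i, hmem i⟩ j)) * (i : K)) Finset.univ
        simpa only [frobenius_def, mul_pow] using hf
      have e2 : ∀ i : s, a i • (i : K) ^ p = ∑ j, algebraMap k K (c j) *
          (algebraMap k K (rt (c.repr ⟨a i, hmem i⟩ j)) ^ p * (i : K) ^ p) := by
        intro i
        have := congrArg (fun x => algebraMap k K x * (i : K) ^ p) (hsum i)
        simp only [map_sum, map_mul, map_pow, Finset.sum_mul, mul_assoc] at this
        rw [Algebra.smul_def]
        exact this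
      simp only [e1, Finset.mul_sum]
      rw [Finset.sum_comm]
      exact Finset.sum_congr rfl fun i _ => (e2 i).symm)
  intro i hi
  have h2 : ∀ j, rt (c.repr ⟨a i, hmem ⟨i, hi⟩⟩ j) = 0 := by
    intro j
    have h3 := congrFun h1 j
    have h4 := hs (fun x => if hx : x ∈ s then rt (c.repr ⟨a x, hmem ⟨x, hx⟩⟩ j) else 0) (by
      rw [← Finset.sum_coe_sort s]
      simpa [Algebra.smul_def] using h3) i hi
    simpa [hi] using h4
  rw [hsum ⟨i, hi⟩]
  simp [h2, hp]

theorem separable_of_PSep {k K : Type*} [Field k] [Field K] [Algebra k K]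
    (h : ∀ p : ℕ, p.Prime → CharP k p → PSep p (algebraMap k K)) (F : IntermediateField k K)
    (hF : F.FG) : ∃ s : Set F, AlgebraicIndependent k ((↑) : s → F) ∧
      Algebra.IsSeparable (↥(IntermediateField.adjoin k (s : Set (↥F)))) (↥F) := by
  have : Algebra.EssFiniteType k F := IntermediateField.essFiniteType_iff.2 hF
  obtain _ | ⟨p, hp, hpk⟩ := CharP.exists' k
  · obtain ⟨s, hs, h⟩ := exists_isTranscendenceBasis_and_isSeparable_of_perfectField k F
    exact ⟨s, hs.1, h⟩
  have : ExpChar k p := .prime hp.out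
  have hP : PSep p (algebraMap k F) := by
    intro n c hc y hy
    have := h p hp.out hpk n c hc (fun j => (y j : K)) (by
      have := congrArg Subtype.val hy
      rw [AddSubmonoidClass.coe_finsetSum] at this
      exact this)
    funext j
    exact Subtype.ext (congrFun this j)
  obtain ⟨s, hs, h⟩ :=
    exists_isTranscendenceBasis_and_isSeparable_of_linearIndepOn_pow_of_essFiniteType
      (k := k) (K := F) p hp.out hP.linearIndependent
  exact ⟨s, hs.1, h⟩

theorem directLimit_structure_map_separable
    {k K : Type u} [Field k] [Field K] (α : k →+* k)
    (hα : α.IsSeparableFieldHom)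
    (β : ℕ → (k →+* K))
    (hcompat : ∀ i : ℕ, β i = (β (i + 1)).comp α)
    (hunion : ∀ x : K, ∃ i : ℕ, x ∈ Set.range (β i)) :
    (β 0).IsSeparableFieldHom := by
  refine @separable_of_PSep k K _ _ (β 0).toAlgebra ?_
  intro p hp hpk
  have : ExpChar k p := .prime hp
  have hP : PSep p α := @PSep.of_forall p k k _ _ α.toAlgebra _ hα
  have hiter : ∀ i : ℕ, ∃ f : k →+* k, PSep p f ∧ β 0 = (β i).comp f := by
    intro i
    induction i with
    | zero => exact ⟨RingHom.id k, fun n c hc => hc, by simp⟩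
    | succ i ih =>
      obtain ⟨f, hf, h⟩ := ih
      exact ⟨α.comp f, hP.comp hf, by rw [h, hcompat i]; rfl⟩
  have hmono : ∀ i j, i ≤ j → Set.range (β i) ⊆ Set.range (β j) := by
    intro i j hij
    induction hij with
    | refl => exact subset_rfl
    | step _ ih =>
      refine ih.trans ?_
      rintro _ ⟨x, rfl⟩
      exact ⟨α x, (RingHom.congr_fun (hcompat _) x).symm⟩
  change PSep p (β 0)
  intro n c hc y hy
  choose e he using fun j => hunion (y j)
  have he' : ∀ j, y j ∈ Set.range (β (Finset.univ.sup e)) := fun j =>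
    hmono _ _ (Finset.le_sup (Finset.mem_univ j)) (he j)
  choose z hz using he'
  obtain ⟨f, hf, h⟩ := hiter (Finset.univ.sup e)
  have := hf n c hc z (by
    apply (β (Finset.univ.sup e)).injective
    simp only [map_sum, map_mul, map_pow, map_zero, hz]
    rw [← hy, h]; rfl)
  funext j
  rw [← hz j, this]
  simp
end

section
/- Let R → S be a local homomorphism of Noetherian local rings, M a homologically finite S-complex, and φ : R → R a contracting endomorphism. Suppose there are infinitely many n ∈ ℕ for which there exists an integer t_n > sup(M) with Ext^i_R(M, ^nR) = 0 for all t_n ≤ i ≤ t_n + depth(R). Then pd_R(M) < ∞. -/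
open CategoryTheory Limits IsLocalRing

/-- The hyper-Ext group `Ext^i_R(M, N)` of a cochain complex `M` of `R`-modules and an
`R`-module `N`: morphisms `M ⟶ N[i]` in the derived category `D(R)`. -/
noncomputable def hyperExt (R : Type u) [CommRing R]
    [HasDerivedCategory (ModuleCat.{u} R)]
    (M : CochainComplex (ModuleCat.{u} R) ℤ) (N : ModuleCat.{u} R) (i : ℤ) :=
  (DerivedCategory.Q.obj M) ⟶ (((DerivedCategory.singleFunctor (ModuleCat.{u} R) 0).obj N)⟦i⟧)

/-- The depth of a Noetherian local ring `R`: the least `n` with `Ext^n_R(k, R) ≠ 0`. -/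
noncomputable def depthNat (R : Type u) [CommRing R] [IsLocalRing R] : ℕ :=
  sInf {n : ℕ | ¬ Subsingleton (((Ext R (ModuleCat.{u} R) n).obj
    (Opposite.op (ModuleCat.of R (ResidueField R)))).obj (ModuleCat.of R R))}

universe u
set_option linter.unusedSectionVars false

section part1
lemma exists_injective_container {R : Type u} [CommRing R] (N : Type u) [AddCommGroup N] [Module R N] :
    ∃ (J : Type u) (_ : AddCommGroup J) (_ : Module R J) (_ : Module.Injective R J)
      (i : N →ₗ[R] J), Function.Injective i := by
  let X := Injective.under (ModuleCat.of R N)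
  refine ⟨X, inferInstance, inferInstance, ?_, (Injective.ι (ModuleCat.of R N)).hom, ?_⟩
  · have : Injective X := inferInstance
    exact (Module.injective_iff_injective_object R X).2 this
  · exact (ModuleCat.mono_iff_injective _).1 inferInstance

/-- Injective hull of `R/p`, presented by the properties we use. -/
lemma exists_hull {R : Type u} [CommRing R] (p : Ideal R) (hp : p ≠ ⊤) :
    ∃ (E : Type u) (_ : AddCommGroup E) (_ : Module R E) (_ : Module.Injective R E) (e : E),
      (∀ r : R, r • e = 0 ↔ r ∈ p) ∧
      (∀ y : E, y ≠ 0 → ∃ r s : R, r • y = s • e ∧ s • e ≠ 0) := by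
  obtain ⟨J, _, _, hJ, i, hi⟩ := exists_injective_container (R := R) (R ⧸ p)
  let e : J := i (Ideal.Quotient.mk p 1)
  have he : ∀ r : R, r • e = 0 ↔ r ∈ p := by
    intro r
    simp only [e]
    rw [← map_smul, map_eq_zero_iff i hi, ← Ideal.Quotient.eq_zero_iff_mem]
    rw [Algebra.smul_def]; simp
  -- maximal essential
  let Ess : Submodule R J → Prop := fun E => ∀ y ∈ E, y ≠ 0 → ∃ r s : R, r • y = s • e ∧ s • e ≠ 0
  obtain ⟨E, heE, hE⟩ := zorn_le_nonempty₀ {E : Submodule R J | Ess E} (by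
    intro c hc hchain y hy
    refine ⟨sSup c, ?_, fun z hz => le_sSup hz⟩
    intro z hz hz0
    rw [Submodule.mem_sSup_of_directed ⟨y, hy⟩ hchain.directedOn] at hz
    obtain ⟨E', hE', hz⟩ := hz
    exact hc hE' z hz hz0) (Submodule.span R {e}) (by
    intro y hy hy0
    obtain ⟨s, rfl⟩ := Submodule.mem_span_singleton.1 hy
    exact ⟨1, s, by simp, hy0⟩)
  have heE' : e ∈ E := heE (Submodule.mem_span_singleton_self e)
  have hEss : Ess E := hE.prop
  obtain ⟨U, -, hU⟩ := zorn_le_nonempty₀ {U : Submodule R J | ∀ y ∈ U, y ∈ E → y = 0} (by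
    intro c hc hchain y hy
    refine ⟨sSup c, ?_, fun z hz => le_sSup hz⟩
    intro z hz hz0
    rw [Submodule.mem_sSup_of_directed ⟨y, hy⟩ hchain.directedOn] at hz
    obtain ⟨E', hE', hz⟩ := hz
    exact hc hE' z hz hz0) ⊥ (by simp)
  have hUE : ∀ y ∈ U, y ∈ E → y = 0 := hU.prop
  have key : ∀ w : J, w ∉ U → ∃ u ∈ U, ∃ r : R, u + r • w ∈ E ∧ u + r • w ≠ 0 := by
    intro w hw
    by_contra hcon
    push Not at hcon
    have h1 : U ⊔ Submodule.span R {w} ≤ U := hU.2 (y := U ⊔ Submodule.span R {w}) (by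
      intro y hy hyE
      obtain ⟨u, hu, v, hv, rfl⟩ := Submodule.mem_sup.1 hy
      obtain ⟨r, rfl⟩ := Submodule.mem_span_singleton.1 hv
      exact hcon u hu r hyE) le_sup_left
    exact hw (h1 (Submodule.mem_sup_right (Submodule.mem_span_singleton_self w)))
  obtain ⟨g, hg⟩ := Module.Injective.out (R := R) (Q := J) (X := E) (Y := J ⧸ U)
    (U.mkQ ∘ₗ E.subtype) (by
      rw [← LinearMap.ker_eq_bot, LinearMap.ker_eq_bot']
      intro y hy
      have : (y : J) ∈ U := by simpa using hy
      exact Subtype.ext (hUE _ this y.2)) E.subtype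
  let π : J →ₗ[R] J := g ∘ₗ U.mkQ
  have hπE : ∀ y ∈ E, π y = y := fun y hy => hg ⟨y, hy⟩
  have hπU : ∀ y ∈ U, π y = 0 := by
    intro y hy
    have : U.mkQ y = 0 := by simpa using hy
    simp [π, this]
  have hrange : LinearMap.range π ≤ E := by
    apply hE.2
    · rintro _ ⟨w, rfl⟩ hy
      have hw : w ∉ U := fun h => hy (hπU w h)
      obtain ⟨u, hu, r, h1, h2⟩ := key w hw
      obtain ⟨r', s, h3, h4⟩ := hEss _ h1 h2
      refine ⟨r' * r, s, ?_, h4⟩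
      rw [← h3, mul_smul, ← map_smul]
      have := hπE _ h1
      rw [map_add, hπU u hu, zero_add] at this
      rw [this]
    · intro y hy
      exact ⟨y, hπE y hy⟩
  refine ⟨E, inferInstance, inferInstance, ⟨?_⟩, ⟨e, heE'⟩, ?_, ?_⟩
  · intro X Y _ _ _ _ f hf g'
    obtain ⟨h, hh⟩ := hJ.out f hf (E.subtype ∘ₗ g')
    refine ⟨(π.codRestrict E (fun x => hrange ⟨x, rfl⟩)) ∘ₗ h, fun x => Subtype.ext ?_⟩
    simp [hh, hπE]
  · intro r
    rw [← he r, ← Subtype.coe_inj]; rfl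
  · rintro ⟨y, hy⟩ hy0
    obtain ⟨r, s, h1, h2⟩ := hEss y hy (fun h => hy0 (Subtype.ext h))
    exact ⟨r, s, Subtype.ext h1, fun h => h2 (congrArg Subtype.val h)⟩
end part1

section part2
open TensorProduct

section algebra
variable {R : Type u} [CommRing R]

lemma mem_smul_top_of_sum {M : Type*} [AddCommGroup M] [Module R M] (I : Ideal R) {ι : Type*} [Fintype ι]
    (a : ι → R) (ha : ∀ i, a i ∈ I) (m : ι → M) : ∑ i, a i • m i ∈ I • (⊤ : Submodule R M) :=
  Submodule.sum_mem _ fun i _ => Submodule.smul_mem_smul (ha i) trivial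

/-- elements of `I M` written in terms of chosen generators -/
lemma exists_sum_of_mem_smul_top {M : Type*} [AddCommGroup M] [Module R M] {ι : Type*} [Fintype ι]
    (a : ι → R) (m : M) (hm : m ∈ Ideal.span (Set.range a) • (⊤ : Submodule R M)) :
    ∃ x : ι → M, m = ∑ i, a i • x i := by
  refine Submodule.smul_induction_on hm ?_ ?_
  · intro r hr n _
    obtain ⟨c, hc⟩ := (Ideal.mem_span_range_iff_exists_fun).1 hr
    refine ⟨fun i => c i • n, ?_⟩
    rw [← hc, Finset.sum_smul]
    refine Finset.sum_congr rfl fun i _ => ?_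
    rw [smul_smul, mul_comm]
  · rintro x y ⟨f, rfl⟩ ⟨g, rfl⟩
    exact ⟨fun i => f i + g i, by simp [Finset.sum_add_distrib]⟩

lemma exists_sum_of_mem_smul_top' {M : Type*} [AddCommGroup M] [Module R M] (I : Ideal R)
    (m : M) (hm : m ∈ I • (⊤ : Submodule R M)) :
    ∃ (n : ℕ) (a : Fin n → R) (x : Fin n → M), (∀ i, a i ∈ I) ∧ m = ∑ i, a i • x i := by
  refine Submodule.smul_induction_on hm ?_ ?_
  · intro r hr n _
    exact ⟨1, fun _ => r, fun _ => n, fun _ => hr, by simp⟩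
  · rintro x y ⟨n, a, f, ha, rfl⟩ ⟨n', a', f', ha', rfl⟩
    refine ⟨n + n', Fin.append a a', Fin.append f f', ?_, ?_⟩
    · intro i
      refine Fin.addCases (fun i => ?_) (fun i => ?_) i
      · simpa using ha i
      · simpa using ha' i
    · rw [Fin.sum_univ_add]; simp

lemma flat_colon {M : Type*} [AddCommGroup M] [Module R M] [Module.Flat R M] (I J : Ideal R) (x : R)
    (hJ : ∀ r, x * r ∈ I → r ∈ J) (m : M) (hm : x • m ∈ I • (⊤ : Submodule R M)) :
    m ∈ J • (⊤ : Submodule R M) := by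
  obtain ⟨n, a, y, ha, h⟩ := exists_sum_of_mem_smul_top' I _ hm
  have h1 : ∑ o : Option (Fin n), (Option.elim o x (fun i => - a i)) • (Option.elim o m y) = 0 := by
    rw [Fintype.sum_option]; simp [h]
  obtain ⟨k, b, z, hz, hb⟩ := Module.Flat.isTrivialRelation_of_sum_smul_eq_zero h1
  have h2 := hz none
  simp only [Option.elim] at h2
  rw [h2]
  refine mem_smul_top_of_sum J _ (fun j => hJ _ ?_) _
  have h3 := hb j
  rw [Fintype.sum_option] at h3
  simp only [Option.elim] at h3
  have : x * b none j = ∑ i, a i * b (some i) j := by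
    rw [← sub_eq_zero, sub_eq_add_neg, ← Finset.sum_neg_distrib]
    simpa using h3
  rw [this]
  exact Ideal.sum_mem _ fun i _ => Ideal.mul_mem_right _ _ (ha i)

lemma flat_of_pure {P1 P0 Z : Type*} [AddCommGroup P1] [Module R P1] [AddCommGroup P0] [Module R P0]
    [AddCommGroup Z] [Module R Z] (f : P1 →ₗ[R] P0) (g : P0 →ₗ[R] Z) [Module.Flat R P0]
    (hg : Function.Surjective g) (hex : Function.Exact f g)
    (h : ∀ (I : Ideal R) (q : P1), f q ∈ I • (⊤ : Submodule R P0) →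
      ∃ q' ∈ I • (⊤ : Submodule R P1), f q = f q') : Module.Flat R Z := by
  refine Module.Flat.of_forall_isTrivialRelation fun {l} {a} {z} hz => ?_
  choose c hc using fun i => hg (z i)
  have h1 : g (∑ i, a i • c i) = 0 := by simp [map_sum, hc, hz]
  obtain ⟨q, hq⟩ := (hex _).1 h1
  obtain ⟨q', hq', hqq⟩ := h (Ideal.span (Set.range a)) q (by
    rw [hq]
    exact mem_smul_top_of_sum _ _ (fun i => Ideal.subset_span (Set.mem_range_self i)) _)
  obtain ⟨w, rfl⟩ := exists_sum_of_mem_smul_top a q' hq'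
  have h2 : ∑ i, a i • (c i - f (w i)) = 0 := by
    simp only [smul_sub, Finset.sum_sub_distrib]
    rw [← hq, hqq]; simp
  obtain ⟨k, b, y, hy, hb⟩ := Module.Flat.isTrivialRelation_of_sum_smul_eq_zero h2
  refine ⟨k, b, fun j => g (y j), fun i => ?_, hb⟩
  have := congrArg g (hy i)
  rw [map_sub, hc, hex.apply_apply_eq_zero, sub_zero] at this
  simpa [map_sum] using this

lemma exists_syz [IsNoetherianRing R] {n : ℕ} (a : Fin n → R) :
    ∃ (m : ℕ) (b : Fin m → Fin n → R), (∀ j, ∑ i, a i * b j i = 0) ∧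
      ∀ c : Fin n → R, ∑ i, a i * c i = 0 → ∃ r : Fin m → R, ∀ i, c i = ∑ j, r j * b j i := by
  let F : (Fin n → R) →ₗ[R] R := ∑ i, a i • LinearMap.proj i
  have hF : ∀ c, F c = ∑ i, a i * c i := by intro c; simp [F]
  obtain ⟨m, b, hb⟩ := Submodule.fg_iff_exists_fin_generating_family.1
    (IsNoetherian.noetherian (LinearMap.ker F))
  refine ⟨m, b, fun j => ?_, fun c hc => ?_⟩
  · rw [← hF]
    have : b j ∈ LinearMap.ker F := by rw [← hb]; exact Submodule.subset_span ⟨j, rfl⟩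
    exact this
  · have : c ∈ LinearMap.ker F := by simpa [hF] using hc
    rw [← hb] at this
    obtain ⟨r, hr⟩ := (Submodule.mem_span_range_iff_exists_fun R).1 this
    exact ⟨r, fun i => by rw [← hr]; simp⟩

lemma factor_inj {A B : Type*} {X : Type u} [AddCommGroup A] [Module R A] [AddCommGroup B] [Module R B]
    [AddCommGroup X] [Module R X] [Module.Injective R X] (F : A →ₗ[R] B) (G : A →ₗ[R] X)
    (hk : LinearMap.ker F ≤ LinearMap.ker G) : ∃ e : B →ₗ[R] X, ∀ a, e (F a) = G a := by
  have hinj : Function.Injective ((LinearMap.ker F).liftQ F le_rfl) := by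
    rw [← LinearMap.ker_eq_bot]
    exact Submodule.ker_liftQ_eq_bot' _ F rfl
  obtain ⟨e, he⟩ := Module.Injective.extension_property R X (A ⧸ LinearMap.ker F) B _ hinj
    ((LinearMap.ker F).liftQ G hk)
  refine ⟨e, fun a => ?_⟩
  have h1 := LinearMap.congr_fun he (Submodule.Quotient.mk a)
  simpa only [LinearMap.comp_apply, Submodule.liftQ_apply] using h1

lemma inj_solve {X : Type u} [AddCommGroup X] [Module R X] [Module.Injective R X] {n m : ℕ}
    (a : Fin n → R) (b : Fin m → Fin n → R)
    (hb : ∀ c : Fin n → R, ∑ i, a i * c i = 0 → ∃ r : Fin m → R, ∀ i, c i = ∑ j, r j * b j i)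
    (x : Fin n → X) (hx : ∀ j, ∑ i, b j i • x i = 0) : ∃ y : X, ∀ i, x i = a i • y := by
  let F : (Fin n → R) →ₗ[R] R := ∑ i, a i • LinearMap.proj i
  have hF : ∀ c, F c = ∑ i, a i * c i := by intro c; simp [F]
  let G : (Fin n → R) →ₗ[R] X := ∑ i, (LinearMap.toSpanSingleton R X (x i)) ∘ₗ LinearMap.proj i
  have hG : ∀ c, G c = ∑ i, c i • x i := by intro c; simp [G]
  have hk : LinearMap.ker F ≤ LinearMap.ker G := by
    intro c hc
    obtain ⟨r, hr⟩ := hb c (by rw [← hF]; exact hc)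
    rw [LinearMap.mem_ker, hG]
    simp only [hr, Finset.sum_smul]
    rw [Finset.sum_comm]
    refine Finset.sum_eq_zero fun j _ => ?_
    simp only [mul_smul, ← Finset.smul_sum, hx, smul_zero]
  obtain ⟨e, he⟩ := factor_inj F G hk
  refine ⟨e 1, fun i => ?_⟩
  have h1 := he (Pi.single i 1)
  rw [hF, hG] at h1
  simp [Pi.single_apply] at h1
  rw [← h1, ← map_smul]; simp

lemma injective_tensor [IsNoetherianRing R] (G X : Type u) [AddCommGroup X] [Module R X] [Module.Injective R X]
    [AddCommGroup G] [Module R G] [Module.Flat R G] : Module.Injective R (G ⊗[R] X) := by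
  refine Module.Baer.injective fun I f => ?_
  obtain ⟨n, a, ha⟩ := Submodule.fg_iff_exists_fin_generating_family.1 (IsNoetherian.noetherian I)
  obtain ⟨m, b, hb0, hb⟩ := exists_syz a
  have haI : ∀ i, a i ∈ I := fun i => by rw [← ha]; exact Submodule.subset_span ⟨i, rfl⟩
  let A : X →ₗ[R] (Fin n → X) := LinearMap.pi fun i => a i • LinearMap.id
  let B : (Fin n → X) →ₗ[R] (Fin m → X) := LinearMap.pi fun j => ∑ i, b j i • LinearMap.proj i
  have hex : Function.Exact A B := by
    intro x
    constructor
    · intro hx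
      obtain ⟨y, hy⟩ := inj_solve a b hb x (fun j => by
        have := congrFun hx j
        simpa [B] using this)
      exact ⟨y, by ext i; simp [A, hy]⟩
    · rintro ⟨y, rfl⟩
      ext j
      simp only [B, A, LinearMap.pi_apply, LinearMap.sum_apply, LinearMap.smul_apply,
        LinearMap.proj_apply, LinearMap.id_apply, smul_smul, ← Finset.sum_smul, Pi.zero_apply]
      rw [show ∑ i, b j i * a i = 0 by rw [← hb0 j]; exact Finset.sum_congr rfl fun i _ => mul_comm _ _]
      simp
  have hexG := Module.Flat.lTensor_exact G hex
  let en := TensorProduct.piRight R R G (fun _ : Fin n => X)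
  let em := TensorProduct.piRight R R G (fun _ : Fin m => X)
  let w : Fin n → G ⊗[R] X := fun i => f ⟨a i, haI i⟩
  have hAe : ∀ y, ∀ i, en (A.lTensor G y) i = a i • y := by
    intro y i
    induction y with
    | zero => simp
    | add x y hx hy => simp only [map_add, Pi.add_apply, hx, hy, smul_add]
    | tmul g x => simp [en, A]
  have hBe : ∀ y, ∀ j, em (B.lTensor G y) j = ∑ i, b j i • en y i := by
    intro y j
    induction y with
    | zero => simp
    | add x y hx hy => simp only [map_add, Pi.add_apply, hx, hy, smul_add, Finset.sum_add_distrib]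
    | tmul g x => simp [en, em, B, tmul_sum]
  have h0 : B.lTensor G (en.symm w) = 0 := by
    apply em.injective
    ext j
    rw [hBe]
    simp only [LinearEquiv.apply_symm_apply, map_zero, Pi.zero_apply]
    simp only [w, ← map_smul, ← map_sum]
    convert map_zero f
    ext
    simp only [Submodule.coe_sum, Submodule.coe_smul, smul_eq_mul, ZeroMemClass.coe_zero]
    rw [← hb0 j]; exact Finset.sum_congr rfl fun i _ => mul_comm _ _
  obtain ⟨y, hy⟩ := (hexG _).1 h0
  refine ⟨LinearMap.toSpanSingleton R _ y, ?_⟩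
  intro x hx
  have hx' := hx
  rw [← ha] at hx'
  obtain ⟨c, hc⟩ := (Submodule.mem_span_range_iff_exists_fun R).1 hx'
  have : (⟨x, hx⟩ : I) = ∑ i, c i • ⟨a i, haI i⟩ := by
    ext; simp [← hc]
  rw [this, map_sum]
  simp only [LinearMap.toSpanSingleton_apply, map_smul]
  rw [← hc, Finset.sum_smul]
  refine Finset.sum_congr rfl fun i _ => ?_
  rw [smul_assoc, ← hAe y i, hy]
  simp [w]

lemma dual_solve {X W : Type u} [AddCommGroup X] [Module R X] [Module.Injective R X]
    [AddCommGroup W] [Module R W] [Module.Injective R W] {n m : ℕ}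
    (a : Fin n → R) (b : Fin m → Fin n → R)
    (hb : ∀ c : Fin n → R, ∑ i, a i * c i = 0 → ∃ r : Fin m → R, ∀ i, c i = ∑ j, r j * b j i)
    (h : Fin n → (X →ₗ[R] W)) (hh : ∑ i, a i • h i = 0) :
    ∃ y : Fin m → (X →ₗ[R] W), ∀ i, h i = ∑ j, b j i • y j := by
  let B : (Fin n → X) →ₗ[R] (Fin m → X) := LinearMap.pi fun j => ∑ i, b j i • LinearMap.proj i
  let H : (Fin n → X) →ₗ[R] W := ∑ i, h i ∘ₗ LinearMap.proj i
  have hk : LinearMap.ker B ≤ LinearMap.ker H := by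
    intro x hx
    obtain ⟨y, hy⟩ := inj_solve a b hb x (fun j => by
        have := congrFun hx j
        simpa [B] using this)
    have := LinearMap.congr_fun hh y
    simp only [LinearMap.sum_apply, LinearMap.smul_apply, LinearMap.zero_apply] at this
    simp [H, hy, this]
  obtain ⟨e, he⟩ := factor_inj B H hk
  refine ⟨fun j => e ∘ₗ LinearMap.single R (fun _ => X) j, fun i => ?_⟩
  ext x
  have h1 := he (Pi.single i x)
  have h2 : H (Pi.single i x) = h i x := by
    simp only [H, LinearMap.sum_apply, LinearMap.comp_apply, LinearMap.proj_apply]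
    rw [Finset.sum_eq_single i]
    · simp
    · intro k _ hk; simp [Pi.single_eq_of_ne hk]
    · simp
  rw [← h2, ← h1]
  have h3 : B (Pi.single i x) = ∑ j, b j i • Pi.single j x := by
    ext j
    simp [B, Pi.single_apply]
  rw [h3]
  simp

lemma vanish_solve {X W : Type u} [AddCommGroup X] [Module R X]
    [AddCommGroup W] [Module R W] [Module.Injective R W] {n : ℕ}
    (a : Fin n → R) (h : X →ₗ[R] W) (hh : ∀ x, (∀ i, a i • x = 0) → h x = 0) :
    ∃ y : Fin n → (X →ₗ[R] W), h = ∑ i, a i • y i := by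
  let A : X →ₗ[R] (Fin n → X) := LinearMap.pi fun i => a i • LinearMap.id
  have hk : LinearMap.ker A ≤ LinearMap.ker h := by
    intro x hx
    exact hh x (fun i => by simpa [A] using congrFun hx i)
  obtain ⟨e, he⟩ := factor_inj A h hk
  refine ⟨fun j => e ∘ₗ LinearMap.single R (fun _ => X) j, ?_⟩
  ext x
  have h1 := he x
  rw [← h1]
  have h3 : A x = ∑ j, a j • Pi.single j x := by
    ext j
    simp [A, Pi.single_apply]
  rw [h3]
  simp

end algebra
end part2

section part3
open TensorProduct

section hull
variable {R : Type u} [CommRing R]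

noncomputable def Hull (p : PrimeSpectrum R) : Type u := (exists_hull p.asIdeal p.2.ne_top).choose
noncomputable instance (p : PrimeSpectrum R) : AddCommGroup (Hull p) :=
  (exists_hull p.asIdeal p.2.ne_top).choose_spec.choose
noncomputable instance (p : PrimeSpectrum R) : Module R (Hull p) :=
  (exists_hull p.asIdeal p.2.ne_top).choose_spec.choose_spec.choose
instance (p : PrimeSpectrum R) : Module.Injective R (Hull p) :=
  (exists_hull p.asIdeal p.2.ne_top).choose_spec.choose_spec.choose_spec.choose
noncomputable def hullE (p : PrimeSpectrum R) : Hull p :=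
  (exists_hull p.asIdeal p.2.ne_top).choose_spec.choose_spec.choose_spec.choose_spec.choose

lemma hullE_smul (p : PrimeSpectrum R) (r : R) : r • hullE p = 0 ↔ r ∈ p.asIdeal :=
  (exists_hull p.asIdeal p.2.ne_top).choose_spec.choose_spec.choose_spec.choose_spec.choose_spec.1 r

lemma hull_ess (p : PrimeSpectrum R) (y : Hull p) (hy : y ≠ 0) :
    ∃ r s : R, r • y = s • hullE p ∧ s • hullE p ≠ 0 :=
  (exists_hull p.asIdeal p.2.ne_top).choose_spec.choose_spec.choose_spec.choose_spec.choose_spec.2 y hy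

lemma hull_tors_zero (p q : PrimeSpectrum R) (h : ¬ q.asIdeal ≤ p.asIdeal) (y : Hull p)
    (hy : ∀ r ∈ q.asIdeal, r • y = 0) : y = 0 := by
  by_contra h0
  obtain ⟨r, s, h1, h2⟩ := hull_ess p y h0
  apply h
  intro a ha
  have : (a * s) • hullE p = 0 := by
    rw [mul_smul, ← h1, smul_comm, hy a ha, smul_zero]
  rw [hullE_smul] at this
  exact (p.2.mem_or_mem this).resolve_right fun h3 => h2 ((hullE_smul p s).2 h3)

lemma hull_unit_inj (p : PrimeSpectrum R) (r : R) (hr : r ∉ p.asIdeal) (y : Hull p)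
    (hy : r • y = 0) : y = 0 := by
  by_contra h0
  obtain ⟨a, s, h1, h2⟩ := hull_ess p y h0
  have : (r * s) • hullE p = 0 := by
    rw [mul_smul, ← h1, smul_comm, hy, smul_zero]
  rw [hullE_smul] at this
  exact h2 ((hullE_smul p s).2 ((p.2.mem_or_mem this).resolve_left hr))

lemma hull_tors_self (p : PrimeSpectrum R) (y : Hull p) (hy : ∀ r ∈ p.asIdeal, r • y = 0) :
    ∃ r ∉ p.asIdeal, ∃ s : R, r • y = s • hullE p := by
  by_cases h0 : y = 0
  · exact ⟨1, fun h => p.2.ne_top ((Ideal.eq_top_iff_one _).2 h), 0, by simp [h0]⟩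
  · obtain ⟨r, s, h1, h2⟩ := hull_ess p y h0
    exact ⟨r, fun h => h2 (by rw [← h1, hy r h]), s, h1⟩

variable (c : PrimeSpectrum R → ℕ) (i : ℕ) (G : Type u) [AddCommGroup G] [Module R G]

abbrev CT : Type u := (p : {p : PrimeSpectrum R // i ≤ c p}) → (Hull p.1 →ₗ[R] (G ⊗[R] Hull p.1))

noncomputable def coev : G →ₗ[R] CT c i G :=
  LinearMap.pi fun p => TensorProduct.mk R G (Hull p.1)

lemma coev_apply (g : G) (p) (x : Hull p.1) : coev c i G g p x = g ⊗ₜ x := rfl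

variable [IsNoetherianRing R] [Module.Flat R G]

lemma CT_flat : Module.Flat R (CT c i G) := by
  refine Module.Flat.of_forall_isTrivialRelation fun {l} {a} {h} hh => ?_
  obtain ⟨m, b, hb0, hb⟩ := exists_syz a
  have : ∀ p : {p : PrimeSpectrum R // i ≤ c p}, ∃ y : Fin m → (Hull p.1 →ₗ[R] (G ⊗[R] Hull p.1)),
      ∀ k, h k p = ∑ j, b j k • y j := by
    intro p
    have := injective_tensor (R := R) G (Hull p.1)
    refine dual_solve a b hb (fun k => h k p) ?_
    have := congrFun hh p
    simpa using this
  choose y hy using this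
  refine ⟨m, fun k j => b j k, fun j p => y p j, fun k => ?_, hb0⟩
  funext p
  rw [hy]
  simp

lemma CT_cotorsion {K P : Type u} [AddCommGroup K] [Module R K] [AddCommGroup P] [Module R P]
    (j : K →ₗ[R] P) (hj : ∀ (A : Type u) [AddCommGroup A] [Module R A], Function.Injective (j.lTensor A))
    (f : K →ₗ[R] CT c i G) : ∃ g : P →ₗ[R] CT c i G, ∀ k, g (j k) = f k := by
  have : ∀ p : {p : PrimeSpectrum R // i ≤ c p}, ∃ g : P →ₗ[R] (Hull p.1 →ₗ[R] (G ⊗[R] Hull p.1)),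
      ∀ k, g (j k) = f k p := by
    intro p
    have := injective_tensor (R := R) G (Hull p.1)
    let fp : K →ₗ[R] (Hull p.1 →ₗ[R] (G ⊗[R] Hull p.1)) := LinearMap.proj p ∘ₗ f
    obtain ⟨e, he⟩ := factor_inj (j.lTensor (Hull p.1)) (TensorProduct.lift fp.flip) (by
      rw [LinearMap.ker_eq_bot.2 (hj _)]; exact bot_le)
    refine ⟨(TensorProduct.curry e).flip, fun k => ?_⟩
    ext x
    have := he (x ⊗ₜ k)
    simpa [fp] using this
  choose g hg using this
  exact ⟨LinearMap.pi g, fun k => by funext p; exact hg p k⟩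

lemma CT_mem_smul (q : Ideal R) (h : CT c i G)
    (hh : ∀ p (x : Hull p.1), (∀ r ∈ q, r • x = 0) → h p x = 0) : h ∈ q • (⊤ : Submodule R (CT c i G)) := by
  obtain ⟨n, a, ha⟩ := Submodule.fg_iff_exists_fin_generating_family.1 (IsNoetherian.noetherian q)
  have haI : ∀ i, a i ∈ q := fun i => by rw [← ha]; exact Submodule.subset_span ⟨i, rfl⟩
  have : ∀ p, ∃ y : Fin n → (Hull p.1 →ₗ[R] (G ⊗[R] Hull p.1)), h p = ∑ k, a k • y k := by
    intro p
    have := injective_tensor (R := R) G (Hull p.1)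
    refine vanish_solve a (h p) fun x hx => hh p x fun r hr => ?_
    rw [← ha] at hr
    obtain ⟨c, rfl⟩ := (Submodule.mem_span_range_iff_exists_fun R).1 hr
    rw [Finset.sum_smul]
    exact Finset.sum_eq_zero fun k _ => by rw [smul_assoc, hx, smul_zero]
  choose y hy using this
  have : h = ∑ k, a k • (fun p => y p k : CT c i G) := by
    funext p; rw [hy]; simp
  rw [this]
  exact mem_smul_top_of_sum q a haI _

lemma tensor_quot_mem (q : PrimeSpectrum R) (g : G) (hg : g ⊗ₜ[R] hullE q = 0) :
    g ∈ q.asIdeal • (⊤ : Submodule R G) := by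
  let j : (R ⧸ q.asIdeal) →ₗ[R] Hull q := q.asIdeal.liftQ (LinearMap.toSpanSingleton R _ (hullE q)) (by
    intro r hr; simpa using (hullE_smul q r).2 hr)
  have hj : Function.Injective j := by
    rw [← LinearMap.ker_eq_bot]
    refine Submodule.ker_liftQ_eq_bot' _ _ ?_
    ext r; simp [hullE_smul]
  have h1 := Module.Flat.lTensor_preserves_injective_linearMap (M := G) j hj
  have h2 : g ⊗ₜ[R] (Ideal.Quotient.mk q.asIdeal 1) = 0 := by
    apply h1
    rw [map_zero, LinearMap.lTensor_tmul]
    have : j (Ideal.Quotient.mk q.asIdeal 1) = hullE q := by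
      change j (Submodule.Quotient.mk 1) = _
      erw [Submodule.liftQ_apply]
      simp
    rw [this, hg]
  have h3 := congrArg (TensorProduct.tensorQuotEquivQuotSMul G q.asIdeal) h2
  rw [map_zero] at h3
  rw [TensorProduct.tensorQuotEquivQuotSMul_tmul_mk] at h3
  simpa using h3

def HH : Prop := ∀ p : PrimeSpectrum R, c p < i → ∀ g : G, g ∈ p.asIdeal • (⊤ : Submodule R G)

lemma not_prime_aux (I : Ideal R) (hI : I ≠ ⊤) (hp : ¬ I.IsPrime) :
    ∃ x : R, I < I ⊔ Ideal.span {x} ∧ I < I.colon {x} := by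
  rw [Ideal.isPrime_iff] at hp
  push Not at hp
  obtain ⟨x, y, hxy, hx, hy⟩ := hp hI
  refine ⟨x, lt_of_le_of_ne le_sup_left fun h => hx ?_, lt_of_le_of_ne (fun r hr => ?_) fun h => hy ?_⟩
  · rw [h]; exact Ideal.mem_sup_right (Ideal.mem_span_singleton_self x)
  · rw [Submodule.mem_colon_singleton]; exact I.mul_mem_right _ hr
  · rw [h, Submodule.mem_colon_singleton, smul_eq_mul, mul_comm]; exact hxy

lemma mem_sup_smul {M : Type*} [AddCommGroup M] [Module R M] (I : Ideal R) (x : R) (m : M)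
    (hm : m ∈ (I ⊔ Ideal.span {x}) • (⊤ : Submodule R M)) :
    ∃ a ∈ I • (⊤ : Submodule R M), ∃ m', m = a + x • m' := by
  rw [Submodule.sup_smul] at hm
  obtain ⟨a, ha, b, hb, rfl⟩ := Submodule.mem_sup.1 hm
  rw [Submodule.ideal_span_singleton_smul] at hb
  obtain ⟨m', -, rfl⟩ := Submodule.mem_smul_pointwise_iff_exists _ _ _ |>.1 hb
  exact ⟨a, ha, m', rfl⟩

lemma smul_mem_of_colon {M : Type*} [AddCommGroup M] [Module R M] (I : Ideal R) (x : R) (m : M)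
    (hm : m ∈ (I.colon {x}) • (⊤ : Submodule R M)) : x • m ∈ I • (⊤ : Submodule R M) := by
  obtain ⟨n, a, y, ha, rfl⟩ := exists_sum_of_mem_smul_top' _ _ hm
  rw [Finset.smul_sum]
  simp only [smul_smul]
  refine mem_smul_top_of_sum I _ (fun k => ?_) _
  have := Submodule.mem_colon_singleton.1 (ha k)
  rwa [smul_eq_mul, mul_comm] at this

lemma coev_pure (hH : HH c i G) (I : Ideal R) : ∀ g : G, coev c i G g ∈ I • (⊤ : Submodule R (CT c i G)) →
    g ∈ I • (⊤ : Submodule R G) := by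
  induction I using IsNoetherian.induction with
  | hgt I ih =>
  intro g hg
  by_cases hI : I = ⊤
  · simp [hI]
  by_cases hp : Ideal.IsPrime I
  · let p : PrimeSpectrum R := ⟨I, hp⟩
    by_cases hc : c p < i
    · exact hH p hc g
    · refine tensor_quot_mem G p g ?_
      obtain ⟨n, a, y, ha, h⟩ := exists_sum_of_mem_smul_top' _ _ hg
      rw [← coev_apply c i G g ⟨p, not_lt.1 hc⟩ (hullE p), h]
      simp only [Finset.sum_apply, Pi.smul_apply, LinearMap.sum_apply, LinearMap.smul_apply]
      refine Finset.sum_eq_zero fun k _ => ?_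
      rw [← map_smul, (hullE_smul p (a k)).2 (ha k), map_zero]
  · obtain ⟨x, h1, h2⟩ := not_prime_aux I hI hp
    have h3 := ih _ h1 g (Submodule.smul_mono_left h1.le hg)
    obtain ⟨a, ha, g', rfl⟩ := mem_sup_smul I x g h3
    have h4 : coev c i G a ∈ I • (⊤ : Submodule R (CT c i G)) := by
      obtain ⟨n, b, y, hb, rfl⟩ := exists_sum_of_mem_smul_top' _ _ ha
      rw [map_sum]; simp only [map_smul]
      exact mem_smul_top_of_sum I b hb _
    have h5 : x • coev c i G g' ∈ I • (⊤ : Submodule R (CT c i G)) := by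
      rw [map_add, map_smul] at hg
      exact (Submodule.add_mem_iff_right _ h4).1 hg
    have := CT_flat c i G
    have h6 := flat_colon I (I.colon {x}) x (fun r hr => by
      rw [Submodule.mem_colon_singleton, smul_eq_mul, mul_comm]; exact hr) _ h5
    exact Submodule.add_mem _ ha (smul_mem_of_colon I x _ (ih _ h2 g' h6))

lemma coev_inj (hH : HH c i G) : Function.Injective (coev c i G) := by
  rw [← LinearMap.ker_eq_bot, LinearMap.ker_eq_bot']
  intro g hg
  have := coev_pure c i G hH ⊥ g (by rw [hg]; exact Submodule.zero_mem _)
  simpa using this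

lemma coker_flat (hH : HH c i G) : Module.Flat R (CT c i G ⧸ LinearMap.range (coev c i G)) := by
  have := CT_flat c i G
  refine flat_of_pure (coev c i G) (Submodule.mkQ _) (Submodule.mkQ_surjective _) ?_ ?_
  · rw [LinearMap.exact_iff]; simp
  · intro I q hq
    exact ⟨q, coev_pure c i G hH I q hq, rfl⟩

lemma tensor_unit_inj (q : PrimeSpectrum R) (r : R) (hr : r ∉ q.asIdeal) (w : G ⊗[R] Hull q)
    (hw : r • w = 0) : w = 0 := by
  have h1 := Module.Flat.lTensor_preserves_injective_linearMap (M := G)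
    (r • LinearMap.id : Hull q →ₗ[R] Hull q) (by
      rw [← LinearMap.ker_eq_bot, LinearMap.ker_eq_bot']
      intro y hy; exact hull_unit_inj q r hr y (by simpa using hy))
  apply h1
  rw [map_zero]
  rw [LinearMap.lTensor_smul]; simpa using hw

lemma tensor_tors (q : PrimeSpectrum R) (w : G ⊗[R] Hull q) (hw : ∀ r ∈ q.asIdeal, r • w = 0) :
    ∃ s ∉ q.asIdeal, ∃ g : G, s • w = g ⊗ₜ hullE q := by
  obtain ⟨n, a, ha⟩ := Submodule.fg_iff_exists_fin_generating_family.1 (IsNoetherian.noetherian q.asIdeal)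
  have haI : ∀ i, a i ∈ q.asIdeal := fun i => by rw [← ha]; exact Submodule.subset_span ⟨i, rfl⟩
  let A : Hull q →ₗ[R] (Fin n → Hull q) := LinearMap.pi fun i => a i • LinearMap.id
  have hex : Function.Exact (LinearMap.ker A).subtype A := LinearMap.exact_subtype_ker_map A
  have hexG := Module.Flat.lTensor_exact G hex
  let en := TensorProduct.piRight R R G (fun _ : Fin n => Hull q)
  have hAe : ∀ y, ∀ i, en (A.lTensor G y) i = a i • y := by
    intro y i
    induction y with
    | zero => simp
    | add x y hx hy => simp only [map_add, Pi.add_apply, hx, hy, smul_add]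
    | tmul g x => simp [en, A]
  obtain ⟨v, rfl⟩ := (hexG w).1 (by
    apply en.injective
    ext k
    rw [hAe, hw _ (haI k)]; simp)
  clear hw
  induction v with
  | zero => exact ⟨1, fun h => q.2.ne_top ((Ideal.eq_top_iff_one _).2 h), 0, by simp⟩
  | add x y hx hy =>
    obtain ⟨s, hs, g, h⟩ := hx
    obtain ⟨s', hs', g', h'⟩ := hy
    refine ⟨s * s', fun hh => (q.2.mem_or_mem hh).elim hs hs', s' • g + s • g', ?_⟩
    rw [map_add, smul_add, mul_smul, mul_smul, h', smul_comm, h, add_tmul, smul_tmul', smul_tmul']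
  | tmul g y =>
    obtain ⟨s, hs, r, h⟩ := hull_tors_self q y.1 (by
      intro r hr
      rw [← ha] at hr
      obtain ⟨c, rfl⟩ := (Submodule.mem_span_range_iff_exists_fun R).1 hr
      rw [Finset.sum_smul]
      refine Finset.sum_eq_zero fun k _ => ?_
      have : A y.1 = 0 := y.2
      have := congrFun this k
      rw [smul_assoc]
      simp only [A, LinearMap.pi_apply, LinearMap.smul_apply, LinearMap.id_apply, Pi.zero_apply] at this
      rw [this, smul_zero])
    refine ⟨s, hs, r • g, ?_⟩
    rw [LinearMap.lTensor_tmul, ← tmul_smul, Submodule.subtype_apply, h, tmul_smul, smul_tmul']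

lemma coker_HH (hc : ∀ p q : PrimeSpectrum R, p < q → c q < c p) (hH : HH c i G) :
    HH c (i+1) (CT c i G ⧸ LinearMap.range (coev c i G)) := by
  intro q hq g'
  have := coker_flat c i G hH
  obtain ⟨h, rfl⟩ := Submodule.mkQ_surjective _ g'
  have hmap : ∀ h : CT c i G, h ∈ q.asIdeal • (⊤ : Submodule R (CT c i G)) →
      (LinearMap.range (coev c i G)).mkQ h ∈ q.asIdeal • (⊤ : Submodule R (CT c i G ⧸ LinearMap.range (coev c i G))) := by
    intro h hh
    obtain ⟨n, b, y, hb, rfl⟩ := exists_sum_of_mem_smul_top' _ _ hh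
    rw [map_sum]; simp only [map_smul]
    exact mem_smul_top_of_sum _ b hb _
  have hne : ∀ p : {p : PrimeSpectrum R // i ≤ c p}, p.1 ≠ q → ¬ q.asIdeal ≤ p.1.asIdeal := by
    intro p hpq hle
    have := hc q p.1 (lt_of_le_of_ne hle hpq.symm)
    have := p.2
    omega
  by_cases hqi : c q < i
  · refine hmap h (CT_mem_smul c i G _ h fun p x hx => ?_)
    rw [hull_tors_zero p.1 q (hne p (fun h => by have := p.2; rw [h] at this; omega)) x hx, map_zero]
  · have hqi' : i ≤ c q := not_lt.1 hqi
    obtain ⟨s, hs, g, hg⟩ := tensor_tors G q (h ⟨q, hqi'⟩ (hullE q)) (fun r hr => by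
      rw [← map_smul, (hullE_smul q r).2 hr, map_zero])
    refine flat_colon q.asIdeal q.asIdeal s (fun r hr => (q.2.mem_or_mem hr).resolve_left hs) _ ?_
    have h1 : s • h - coev c i G g ∈ q.asIdeal • (⊤ : Submodule R (CT c i G)) := by
      refine CT_mem_smul c i G _ _ fun p x hx => ?_
      by_cases hpq : p.1 = q
      · obtain ⟨p, hp⟩ := p
        simp only at hpq
        subst hpq
        obtain ⟨r, hr, r', h3⟩ := hull_tors_self p x hx
        refine tensor_unit_inj G p r hr _ ?_
        rw [← map_smul, h3, map_smul]
        have : (s • h - (coev c i G) g) ⟨p, hp⟩ (hullE p) = 0 := by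
          simp only [Pi.sub_apply, Pi.smul_apply, LinearMap.sub_apply, LinearMap.smul_apply]
          rw [hg, sub_eq_zero]; rfl
        rw [this, smul_zero]
      · rw [hull_tors_zero p.1 q (hne p hpq) x hx, map_zero]
    have h2 := hmap _ h1
    rw [map_sub, map_smul] at h2
    have h3 : (LinearMap.range (coev c i G)).mkQ (coev c i G g) = 0 := by simp
    rwa [h3, sub_zero] at h2

lemma HH_top (hH : ∀ p : PrimeSpectrum R, ∀ g : G, g ∈ p.asIdeal • (⊤ : Submodule R G)) (g : G) : g = 0 := by
  have : ∀ I : Ideal R, ∀ g : G, g ∈ I • (⊤ : Submodule R G) := by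
    intro I
    induction I using IsNoetherian.induction with
    | hgt I ih =>
    intro g
    by_cases hI : I = ⊤
    · simp [hI]
    by_cases hp : Ideal.IsPrime I
    · exact hH ⟨I, hp⟩ g
    obtain ⟨x, h1, h2⟩ := not_prime_aux I hI hp
    obtain ⟨a, ha, g', rfl⟩ := mem_sup_smul I x g (ih _ h1 g)
    exact Submodule.add_mem _ ha (smul_mem_of_colon I x _ (ih _ h2 g'))
  simpa using this ⊥ g

end hull

section chain
variable {R : Type u} [CommRing R]

/-- exactness of `Hom(P,N)` at the middle spot -/
def ExAt {P2 P1 P0 : Type u} [AddCommGroup P2] [Module R P2] [AddCommGroup P1] [Module R P1]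
    [AddCommGroup P0] [Module R P0] (f : P2 →ₗ[R] P1) (g : P1 →ₗ[R] P0)
    (N : Type u) [AddCommGroup N] [Module R N] : Prop :=
  ∀ h : P1 →ₗ[R] N, h ∘ₗ f = 0 → ∃ k : P0 →ₗ[R] N, k ∘ₗ g = h

variable [IsNoetherianRing R]
  (P : ℕ → Type u) [∀ i, AddCommGroup (P i)] [∀ i, Module R (P i)] [∀ i, Module.Projective R (P i)]
  (d : ∀ i, P (i+1) →ₗ[R] P i)

lemma ker_flat {P Z : Type u} [AddCommGroup P] [Module R P] [AddCommGroup Z] [Module R Z]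
    [Module.Flat R P] (K : Submodule R P) [Module.Flat R (P ⧸ K)] : Module.Flat R K := by
  rw [Module.Flat.iff_rTensor_preserves_injective_linearMap]
  intro N N' _ _ _ _ f hf
  have h1 : Function.Injective (K.subtype.lTensor N) :=
    LinearMap.lTensor_injective_of_exact_of_flat K.mkQ K.mkQ_surjective K.subtype K.subtype_injective
      (LinearMap.exact_subtype_mkQ K) N
  have h2 := Module.Flat.rTensor_preserves_injective_linearMap (M := P) f hf
  have h3 : K.subtype.lTensor N' ∘ₗ f.rTensor K = f.rTensor P ∘ₗ K.subtype.lTensor N := by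
    ext; simp
  have h4 : Function.Injective (K.subtype.lTensor N' ∘ₗ f.rTensor K) := by
    rw [h3]; exact h2.comp h1
  exact Function.Injective.of_comp h4

lemma range_flat' (hd : ∀ i, Function.Exact (d (i+1)) (d i))
    (hflat : Module.Flat R (P 0 ⧸ LinearMap.range (d 0))) :
    ∀ i, Module.Flat R (P i ⧸ LinearMap.range (d i)) := by
  intro i
  induction i with
  | zero => exact hflat
  | succ i ih =>
    have h1 : LinearMap.range (d (i+1)) = LinearMap.ker (d i) := (LinearMap.exact_iff.1 (hd i)).symm
    rw [h1]
    have e := (d i).quotKerEquivRange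
    have : Module.Flat R (LinearMap.range (d i)) := ker_flat (Z := P 0) _
    exact Module.Flat.of_linearEquiv e

lemma factor_range (hd : ∀ i, Function.Exact (d (i+1)) (d i)) (j : ℕ) {N : Type u} [AddCommGroup N] [Module R N]
    (h : P (j+1) →ₗ[R] N) (hh : h ∘ₗ d (j+1) = 0) :
    ∃ f : LinearMap.range (d j) →ₗ[R] N, ∀ x, f ((d j).rangeRestrict x) = h x := by
  have hk : LinearMap.ker (d j) ≤ LinearMap.ker h := by
    intro x hx
    obtain ⟨y, rfl⟩ := (hd j x).1 hx
    exact LinearMap.congr_fun hh y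
  refine ⟨(LinearMap.ker (d j)).liftQ h hk ∘ₗ (d j).quotKerEquivRange.symm.toLinearMap, fun x => ?_⟩
  have : (d j).quotKerEquivRange.symm ((d j).rangeRestrict x) = Submodule.Quotient.mk x := by
    rw [LinearEquiv.symm_apply_eq]; ext; simp
  simp [this]

lemma flat_ExAt (hd : ∀ i, Function.Exact (d (i+1)) (d i))
    (hflat : Module.Flat R (P 0 ⧸ LinearMap.range (d 0)))
    (c : PrimeSpectrum R → ℕ) (hc : ∀ p q : PrimeSpectrum R, p < q → c q < c p)
    (D : ℕ) (hD : ∀ p, c p < D) (k : ℕ) : ∀ (i : ℕ) (G : Type u) [AddCommGroup G] [Module R G] [Module.Flat R G],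
      HH c i G → i + k = D → ∀ j, k ≤ j → ExAt (d (j+1)) (d j) G := by
  induction k with
  | zero =>
    intro i G _ _ _ hH hi j _ h hh
    have h0 : ∀ g : G, g = 0 := HH_top G fun p g => hH p (by have := hD p; omega) g
    exact ⟨0, by ext x; exact (h0 _).trans (h0 _).symm⟩
  | succ k ih =>
    intro i G _ _ _ hH hi j hj h hh
    obtain ⟨j, rfl⟩ : ∃ j', j = j' + 1 := ⟨j - 1, by omega⟩
    obtain ⟨f, hf⟩ := factor_range P d hd (j+1) h hh
    have hfl := range_flat' P d hd hflat (j+1)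
    obtain ⟨g, hg⟩ := CT_cotorsion c i G (LinearMap.range (d (j+1))).subtype (fun A _ _ =>
      LinearMap.lTensor_injective_of_exact_of_flat _ (Submodule.mkQ_surjective _) _ (Submodule.subtype_injective _)
      (LinearMap.exact_subtype_mkQ _) A) (coev c i G ∘ₗ f)
    have hg' : ∀ x, g (d (j+1) x) = coev c i G (h x) := by
      intro x
      rw [← hf, ← LinearMap.comp_apply (coev c i G), ← hg]; rfl
    have hGf := coker_flat c i G hH
    obtain ⟨k', hk'⟩ := ih (i+1) (CT c i G ⧸ LinearMap.range (coev c i G)) (coker_HH c i G hc hH) (by omega) j (by omega)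
      ((LinearMap.range (coev c i G)).mkQ ∘ₗ g) (by
        ext x
        simp [hg'])
    obtain ⟨l, hl⟩ := Module.projective_lifting_property ((LinearMap.range (coev c i G)).mkQ) k' (Submodule.mkQ_surjective _)
    have hr : ∀ x, g x - l (d j x) ∈ LinearMap.range (coev c i G) := by
      intro x
      rw [← Submodule.ker_mkQ (LinearMap.range (coev c i G)), LinearMap.mem_ker, map_sub]
      have h1 := LinearMap.congr_fun hk' x
      have h2 := LinearMap.congr_fun hl (d j x)
      simp only [LinearMap.comp_apply] at h1 h2
      rw [h2, h1, sub_self]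
    let E := LinearEquiv.ofInjective (coev c i G) (coev_inj c i G hH)
    let gg : P (j+1) →ₗ[R] LinearMap.range (coev c i G) := LinearMap.codRestrict _ (g - l ∘ₗ d j) hr
    refine ⟨E.symm.toLinearMap ∘ₗ gg, ?_⟩
    ext x
    simp only [LinearMap.comp_apply, LinearEquiv.coe_coe]
    rw [LinearEquiv.symm_apply_eq]
    ext1
    simp [gg, E, hg', (hd j).apply_apply_eq_zero]

theorem ExAt_of_flat (hd : ∀ i, Function.Exact (d (i+1)) (d i))
    (hflat : Module.Flat R (P 0 ⧸ LinearMap.range (d 0)))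
    (c : PrimeSpectrum R → ℕ) (hc : ∀ p q : PrimeSpectrum R, p < q → c q < c p)
    (D : ℕ) (hD : ∀ p, c p < D) (j : ℕ) (hj : D ≤ j) (N : Type u) [AddCommGroup N] [Module R N] :
    ExAt (d (j+1)) (d j) N := by
  have h1 := range_flat' P d hd hflat j
  have : Module.Flat R (LinearMap.range (d j)) := ker_flat (Z := P 0) _
  obtain ⟨k, hk⟩ := flat_ExAt P d hd hflat c hc D hD D 0 (LinearMap.range (d j))
    (fun p hp => by omega) (by omega) j hj (d j).rangeRestrict (by
      ext x; simp [(hd j).apply_apply_eq_zero])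
  intro h hh
  obtain ⟨f, hf⟩ := factor_range P d hd j h hh
  refine ⟨f ∘ₗ k, ?_⟩
  ext x
  rw [← hf, ← hk]; rfl

end chain
end part3

section part4
lemma exists_codim (R : Type u) [CommRing R] [IsNoetherianRing R] [IsLocalRing R] :
    ∃ (c : PrimeSpectrum R → ℕ) (D : ℕ), (∀ p q : PrimeSpectrum R, p < q → c q < c p) ∧ ∀ p, c p < D := by
  have h1 : ringKrullDim R < ⊤ := ringKrullDim_lt_top
  have hfin : ∀ p : PrimeSpectrum R, Order.coheight p < ⊤ := by
    intro p
    have := Order.coheight_le_krullDim p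
    have h2 : (Order.coheight p : WithBot ℕ∞) < ⊤ := lt_of_le_of_lt this h1
    rw [← WithBot.coe_top] at h2
    exact WithBot.coe_lt_coe.1 h2
  obtain ⟨D, hD⟩ : ∃ D : ℕ, ringKrullDim R ≤ (D : WithBot ℕ∞) := by
    have h0 := (ringKrullDim_nonneg_of_nontrivial (R := R))
    obtain ⟨n, hn⟩ := WithBot.ne_bot_iff_exists.1 (ne_of_gt (lt_of_lt_of_le (WithBot.bot_lt_coe 0) h0))
    rw [← hn] at h1 ⊢
    have : n ≠ ⊤ := by rintro rfl; exact absurd h1 (by simp)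
    lift n to ℕ using this
    exact ⟨n, le_rfl⟩
  have hcn : ∀ p : PrimeSpectrum R, ((Order.coheight p).toNat : ℕ∞) = Order.coheight p := fun p =>
    ENat.natCast_toNat (hfin p).ne
  refine ⟨fun p => (Order.coheight p).toNat, D + 1, fun p q hpq => ?_, fun p => ?_⟩
  · have := Order.coheight_strictAnti hpq (hfin q)
    rw [← hcn p, ← hcn q] at this
    exact_mod_cast this
  · have := (Order.coheight_le_krullDim p).trans hD
    rw [← hcn p] at this
    have h3 : (Order.coheight p).toNat ≤ D := by exact_mod_cast this
    exact Nat.lt_succ_of_le h3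
end part4

section part5
section good
variable {A B : Type u} [CommRing A] [CommRing B] (π : A →+* B)

/-- The subquotient `K / L` is noetherian over `A` and every element of `ker π` acts nilpotently. -/
def GoodSQ {Y : Type u} [AddCommGroup Y] [Module A Y] (K L : Submodule A Y) : Prop :=
  IsNoetherian A (K.map L.mkQ) ∧ ∀ a, π a = 0 → ∃ n : ℕ, ∀ y ∈ K, a ^ n • y ∈ L

variable {π} {Y Y' : Type u} [AddCommGroup Y] [Module A Y] [AddCommGroup Y'] [Module A Y']

lemma GoodSQ.ext {K L K' L' : Submodule A Y} {K'' L'' : Submodule A Y'} (f : Y →ₗ[A] Y')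
    (h' : GoodSQ π K' L') (h'' : GoodSQ π K'' L'') (hL : L' ≤ L) (hfL : ∀ y ∈ L, f y ∈ L'')
    (hfK : ∀ y ∈ K, f y ∈ K'') (hex : ∀ y ∈ K, f y ∈ L'' → y ∈ K' ⊔ L) : GoodSQ π K L := by
  refine ⟨?_, fun a ha => ?_⟩
  · rw [isNoetherian_submodule]
    intro s hs
    refine Submodule.fg_of_fg_map_of_fg_inf_ker (L.mapQ L'' f hfL) ?_ ?_
    · refine (isNoetherian_submodule.1 h''.1) _ ?_
      rintro _ ⟨y, hy, rfl⟩
      obtain ⟨z, hz, rfl⟩ := hs hy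
      exact ⟨f z, hfK z hz, rfl⟩
    · let g : (Y ⧸ L') →ₗ[A] (Y ⧸ L) := Submodule.factor hL
      have h1 : IsNoetherian A ((K'.map L'.mkQ).map g) := by
        have := h'.1
        infer_instance
      refine (isNoetherian_submodule.1 h1) _ ?_
      rintro y ⟨hy, hy'⟩
      obtain ⟨z, hz, rfl⟩ := hs hy
      have h2 : f z ∈ L'' := by
        have : L''.mkQ (f z) = 0 := hy'
        simpa using this
      obtain ⟨v, hv, l, hl, rfl⟩ := Submodule.mem_sup.1 (hex z hz h2)
      refine ⟨L'.mkQ v, ⟨v, hv, rfl⟩, ?_⟩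
      have : L.mkQ l = 0 := by simpa using hl
      rw [map_add, this, add_zero]; rfl
  · obtain ⟨n, hn⟩ := h'.2 a ha
    obtain ⟨m, hm⟩ := h''.2 a ha
    refine ⟨n + m, fun y hy => ?_⟩
    obtain ⟨v, hv, l, hl, h⟩ := Submodule.mem_sup.1 (hex (a ^ m • y) (K.smul_mem _ hy) (by
      rw [map_smul]; exact hm _ (hfK y hy)))
    rw [pow_add, mul_smul, ← h, smul_add]
    exact L.add_mem (hL (hn v hv)) (L.smul_mem _ hl)

lemma GoodSQ.surj {K L : Submodule A Y} {K'' L'' : Submodule A Y'} (α : Y' →ₗ[A] Y)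
    (h'' : GoodSQ π K'' L'') (hL : ∀ y ∈ L'', α y ∈ L)
    (hK : ∀ y ∈ K, ∃ z ∈ K'', y - α z ∈ L) : GoodSQ π K L := by
  refine ⟨?_, fun a ha => ?_⟩
  · let g : (Y' ⧸ L'') →ₗ[A] (Y ⧸ L) := L''.mapQ L α hL
    have h1 : IsNoetherian A ((K''.map L''.mkQ).map g) := by
        have := h''.1
        infer_instance
    rw [isNoetherian_submodule]
    intro s hs
    refine (isNoetherian_submodule.1 h1) _ (hs.trans ?_)
    rintro _ ⟨y, hy, rfl⟩
    obtain ⟨z, hz, h⟩ := hK y hy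
    refine ⟨L''.mkQ z, ⟨z, hz, rfl⟩, ?_⟩
    change L.mkQ (α z) = L.mkQ y
    rw [eq_comm, ← sub_eq_zero, ← map_sub]
    exact (Submodule.Quotient.mk_eq_zero _).2 h
  · obtain ⟨m, hm⟩ := h''.2 a ha
    refine ⟨m, fun y hy => ?_⟩
    obtain ⟨z, hz, h⟩ := hK y hy
    have := L.add_mem (L.smul_mem (a^m) h) (hL _ (hm z hz))
    rwa [map_smul, ← smul_add, sub_add_cancel] at this

lemma GoodSQ.of_le {K L : Submodule A Y} (h : K ≤ L) : GoodSQ π K L := by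
  refine ⟨?_, fun a ha => ⟨0, fun y hy => by simpa using h hy⟩⟩
  have : K.map L.mkQ = ⊥ := by
    rw [eq_bot_iff]; rintro _ ⟨y, hy, rfl⟩; simpa using h hy
  rw [this]; infer_instance

lemma GoodSQ.nakayama [IsLocalRing B] (hπ : Function.Surjective π) {K L : Submodule A Y} (h : GoodSQ π K L)
    (x : A) (hx : π x ∈ maximalIdeal B) (hK : ∀ y ∈ K, ∃ z ∈ K, y - x • z ∈ L) : K ≤ L := by
  have hN := h.1
  obtain ⟨r, hr, hr0⟩ := Submodule.exists_sub_one_mem_and_smul_eq_zero_of_fg_of_le_smul (Ideal.span {x})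
    (K.map L.mkQ) ((isNoetherian_submodule.1 hN) _ le_rfl) (by
      rintro _ ⟨y, hy, rfl⟩
      obtain ⟨z, hz, h1⟩ := hK y hy
      have : L.mkQ y = x • L.mkQ z := by
        rw [← sub_eq_zero, ← map_smul, ← map_sub]; exact (Submodule.Quotient.mk_eq_zero _).2 h1
      rw [this]
      exact Submodule.smul_mem_smul (Ideal.mem_span_singleton_self x) ⟨z, hz, rfl⟩)
  have hu : IsUnit (π r) := by
    by_contra hnu
    have h1 : π r ∈ maximalIdeal B := (mem_maximalIdeal _).2 hnu
    obtain ⟨c, hc⟩ := Ideal.mem_span_singleton'.1 hr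
    have h2 : π r - 1 ∈ maximalIdeal B := by
      rw [← map_one π, ← map_sub, ← hc, map_mul]; exact Ideal.mul_mem_left _ _ hx
    have h3 := Ideal.sub_mem _ h1 h2
    rw [sub_sub_cancel] at h3
    exact (maximalIdeal.isMaximal B).ne_top ((Ideal.eq_top_iff_one _).2 h3)
  obtain ⟨v, hv⟩ := hu.exists_right_inv
  obtain ⟨w, rfl⟩ := hπ v
  obtain ⟨n, hn⟩ := h.2 (w * r - 1) (by rw [map_sub, map_mul, map_one, mul_comm, hv, sub_self])
  intro y hy
  have h1 : ∀ n : ℕ, (w * r - 1) ^ n • L.mkQ y = (-1 : A) ^ n • L.mkQ y := by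
    intro n
    induction n with
    | zero => simp
    | succ n ih =>
      rw [pow_succ', mul_smul, ih, smul_comm, sub_smul, mul_smul, hr0 _ ⟨y, hy, rfl⟩, smul_zero, one_smul,
        zero_sub, pow_succ, mul_smul, neg_one_smul]
  have h2 : (-1 : A) ^ n • L.mkQ y = 0 := by
    rw [← h1, ← map_smul]; exact (Submodule.Quotient.mk_eq_zero _).2 (hn y hy)
  have h3 : L.mkQ y = 0 := by
    have := congrArg (fun z => (-1 : A) ^ n • z) h2
    simpa [smul_smul, ← mul_pow] using this
  simpa using h3

end good

section complex
variable {R A B : Type u} [CommRing R] [CommRing A] [CommRing B] [Algebra R A] (π : A →+* B)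

/-- `I Y` as an `A`-submodule. -/
def MI (I : Ideal R) (Y : Type u) [AddCommGroup Y] [Module A Y] : Submodule A Y :=
  I.map (algebraMap R A) • (⊤ : Submodule A Y)

lemma mem_MI (I : Ideal R) {Y : Type u} [AddCommGroup Y] [Module A Y] [Module R Y] [IsScalarTower R A Y] (y : Y) :
    y ∈ MI (A := A) I Y ↔ y ∈ I • (⊤ : Submodule R Y) := by
  have := Ideal.smul_restrictScalars (S := A) I (⊤ : Submodule A Y)
  rw [Submodule.restrictScalars_top] at this
  rw [← this]; rfl

lemma map_MI (I : Ideal R) {Y Y' : Type u} [AddCommGroup Y] [Module A Y] [AddCommGroup Y'] [Module A Y']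
    (f : Y →ₗ[A] Y') (y : Y) (hy : y ∈ MI (A := A) I Y) : f y ∈ MI (A := A) I Y' := by
  have h : (MI (A := A) I Y).map f ≤ MI (A := A) I Y' := by
    rw [MI, Submodule.map_smul'']
    exact Submodule.smul_mono le_rfl le_top
  exact h ⟨y, hy, rfl⟩

lemma MI_mono {I J : Ideal R} (h : I ≤ J) (Y : Type u) [AddCommGroup Y] [Module A Y] :
    MI (A := A) I Y ≤ MI (A := A) J Y := Submodule.smul_mono_left (Ideal.map_mono h)

variable (P : ℕ → Type u) [∀ i, AddCommGroup (P i)] [∀ i, Module R (P i)] [∀ i, Module A (P i)]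
  [∀ i, IsScalarTower R A (P i)] [∀ i, Module.Flat R (P i)] (d : ∀ i, P (i+1) →ₗ[A] P i)

/-- homology of `P / I P` -/
def GA (i : ℕ) (I : Ideal R) : Prop :=
  GoodSQ π ((MI (A := A) I (P i)).comap (d i)) (LinearMap.range (d (i+1)) ⊔ MI (A := A) I (P (i+1)))

/-- homology of `I P` -/
def GB (i : ℕ) (I : Ideal R) : Prop :=
  GoodSQ π (LinearMap.ker (d i) ⊓ MI (A := A) I (P (i+1))) ((MI (A := A) I (P (i+1+1))).map (d (i+1)))

variable {P d}

lemma GB_to_GA (hdd : ∀ i x, d i (d (i+1) x) = 0) (i : ℕ) (I : Ideal R) (hP : GoodSQ π (LinearMap.ker (d (i+1))) (LinearMap.range (d (i+1+1))))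
    (h : GB π P d i I) : GA π P d (i+1) I := by
  refine GoodSQ.ext (d (i+1)) hP h le_sup_left ?_ ?_ ?_
  · intro y hy
    obtain ⟨_, ⟨u, rfl⟩, v, hv, rfl⟩ := Submodule.mem_sup.1 hy
    rw [map_add, hdd, zero_add]
    exact ⟨v, hv, rfl⟩
  · intro y hy
    exact ⟨hdd _ _, hy⟩
  · rintro y hy ⟨u, hu, h⟩
    have : y = (y - u) + u := by abel
    rw [this]
    refine Submodule.add_mem_sup ?_ (Submodule.mem_sup_right hu)
    rw [LinearMap.mem_ker, map_sub, h, sub_self]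

lemma GA_to_GB (hdd : ∀ i x, d i (d (i+1) x) = 0) (i : ℕ) [IsNoetherianRing R] (h : ∀ I : Ideal R, GA π P d i I) (I : Ideal R) : GB π P d i I := by
  obtain ⟨s, rfl⟩ : ∃ s : Finset R, Ideal.span (s : Set R) = I := (IsNoetherian.noetherian I)
  classical
  induction s using Finset.induction_on with
  | empty =>
    refine GoodSQ.of_le ?_
    rintro y ⟨-, hy⟩
    simp [MI] at hy
    simp [hy]
  | insert a s ha ih =>
    set I' : Ideal R := Ideal.span (s : Set R) with hI'
    have hI : Ideal.span ((insert a s : Finset R) : Set R) = I' ⊔ Ideal.span {a} := by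
      rw [Finset.coe_insert, Ideal.span_insert, sup_comm]
    rw [hI]
    set I := I' ⊔ Ideal.span {a}
    have hle : I' ≤ I := le_sup_left
    have haI : ∀ {Y : Type u} [AddCommGroup Y] [Module A Y] [Module R Y] [IsScalarTower R A Y] (z : Y),
        algebraMap R A a • z ∈ MI (A := A) I Y := by
      intro Y _ _ _ _ z
      exact Submodule.smul_mem_smul (Ideal.mem_map_of_mem _ (Ideal.mem_sup_right (Ideal.mem_span_singleton_self a))) trivial
    have h1 : GoodSQ π ((MI (A := A) I' (P i)).comap (d i) ⊓ MI (A := A) I (P (i+1)))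
        ((MI (A := A) I (P (i+1+1))).map (d (i+1)) ⊔ MI (A := A) I' (P (i+1))) := by
      refine GoodSQ.surj (algebraMap R A a • LinearMap.id) (h (I'.colon {a})) ?_ ?_
      · intro y hy
        obtain ⟨_, ⟨u, rfl⟩, v, hv, rfl⟩ := Submodule.mem_sup.1 hy
        rw [map_add]
        refine Submodule.add_mem_sup ⟨algebraMap R A a • u, haI u, by simp⟩ ?_
        rw [LinearMap.smul_apply, LinearMap.id_apply, mem_MI, algebraMap_smul]
        exact smul_mem_of_colon I' a v ((mem_MI _ _).1 hv)
      · rintro y ⟨hy, hyI⟩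
        replace hy : y ∈ (MI (A := A) I' (P i)).comap (d i) := hy
        obtain ⟨b, hb, z, hz⟩ := mem_sup_smul I' a y ((mem_MI _ _).1 hyI)
        have hb' := (mem_MI (A := A) _ _).2 hb
        refine ⟨z, ?_, Submodule.mem_sup_right ?_⟩
        · rw [Submodule.mem_comap] at hy ⊢
          rw [hz, map_add] at hy
          have h3 := (Submodule.add_mem_iff_right _ (map_MI I' (d i) b hb')).1 hy
          rw [mem_MI] at h3 ⊢
          rw [← algebraMap_smul A a z, map_smul, algebraMap_smul] at h3
          exact flat_colon I' _ a (fun r hr => by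
            rw [Submodule.mem_colon_singleton, smul_eq_mul, mul_comm]; exact hr) _ h3
        · rw [hz, ← algebraMap_smul A a z]
          simpa using hb'
    refine GoodSQ.ext LinearMap.id ih h1 (Submodule.map_mono (MI_mono hle _)) ?_ ?_ ?_
    · intro y hy; exact Submodule.mem_sup_left hy
    · rintro y ⟨hy, hy'⟩
      refine ⟨?_, hy'⟩
      have : d i y = 0 := hy
      change d i y ∈ MI (A := A) I' (P i)
      rw [this]; exact Submodule.zero_mem _
    · rintro y ⟨hy, hy'⟩ hy2
      obtain ⟨_, ⟨u, hu, rfl⟩, v, hv, h⟩ := Submodule.mem_sup.1 hy2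
      rw [LinearMap.id_apply] at h
      rw [← h, add_comm (d (i+1) u)]
      refine Submodule.add_mem_sup ⟨?_, hv⟩ ⟨u, hu, rfl⟩
      have : d i y = 0 := hy
      rw [← h, map_add, hdd, zero_add] at this
      exact this

lemma GA_all (hdd : ∀ i x, d i (d (i+1) x) = 0) [IsNoetherianRing R] (h0 : Subsingleton (P 1))
    (hP : ∀ i, GoodSQ π (LinearMap.ker (d i)) (LinearMap.range (d (i+1)))) (i : ℕ) :
    ∀ I : Ideal R, GA π P d i I := by
  induction i with
  | zero =>
    intro I
    refine GoodSQ.of_le fun y hy => ?_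
    have : y = 0 := Subsingleton.elim (α := P 1) y 0
    rw [this]; exact Submodule.zero_mem _
  | succ i ih =>
    intro I
    exact GB_to_GA π hdd i I (hP (i+1)) (GA_to_GB π hdd i ih I)

end complex
end part5

section part6
section complex
variable {R A B : Type u} [CommRing R] [CommRing A] [CommRing B] [Algebra R A] (π : A →+* B)

/-- functional to the residue field -/
lemma exists_functional [IsLocalRing R] {Y : Type u} [AddCommGroup Y] [Module R Y] (U : Submodule R Y)
    (hU : maximalIdeal R • (⊤ : Submodule R Y) ≤ U) (y : Y) (hy : y ∉ U) :
    ∃ h : Y →ₗ[R] ResidueField R, (∀ u ∈ U, h u = 0) ∧ h y ≠ 0 := by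
  have htor : Module.IsTorsionBySet R (Y ⧸ U) (maximalIdeal R : Set R) := by
    intro z a
    obtain ⟨z, rfl⟩ := U.mkQ_surjective z
    rw [← map_smul]
    exact (Submodule.Quotient.mk_eq_zero _).2 (hU (Submodule.smul_mem_smul a.2 trivial))
  let _ : Module (ResidueField R) (Y ⧸ U) := htor.module
  have : IsScalarTower R (ResidueField R) (Y ⧸ U) := htor.isScalarTower
  have hne : U.mkQ y ≠ 0 := fun h => hy ((Submodule.Quotient.mk_eq_zero _).1 h)
  have : ∃ f : Module.Dual (ResidueField R) (Y ⧸ U), f (U.mkQ y) ≠ 0 := by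
    by_contra hcon
    push Not at hcon
    exact hne ((Module.forall_dual_apply_eq_zero_iff (ResidueField R) _).1 hcon)
  obtain ⟨f, hf⟩ := this
  refine ⟨(f.restrictScalars R) ∘ₗ U.mkQ, fun u hu => ?_, hf⟩
  have : U.mkQ u = 0 := (Submodule.Quotient.mk_eq_zero _).2 hu
  rw [LinearMap.comp_apply, this, map_zero]

variable (P : ℕ → Type u) [∀ i, AddCommGroup (P i)] [∀ i, Module R (P i)] [∀ i, Module A (P i)]
  [∀ i, IsScalarTower R A (P i)] [∀ i, Module.Flat R (P i)] (d : ∀ i, P (i+1) →ₗ[A] P i)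

theorem TI [IsNoetherianRing R] [IsLocalRing R] [IsLocalRing B] (hπ : Function.Surjective π)
    (hloc : ∀ x ∈ maximalIdeal R, π (algebraMap R A x) ∈ maximalIdeal B)
    (hdd : ∀ i x, d i (d (i+1) x) = 0) (h0 : Subsingleton (P 1))
    (hP : ∀ i, GoodSQ π (LinearMap.ker (d i)) (LinearMap.range (d (i+1)))) (s : ℕ)
    (hex : ExAt ((d (s+1)).restrictScalars R) ((d s).restrictScalars R) (ResidueField R)) (I : Ideal R) :
    ∀ y : P (s+1), d s y ∈ I • (⊤ : Submodule R (P s)) → ∃ u, y - d (s+1) u ∈ I • (⊤ : Submodule R (P (s+1))) := by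
  induction I using IsNoetherian.induction with
  | hgt I ih =>
  intro y hy
  by_cases hI : I = ⊤
  · exact ⟨0, by simp [hI]⟩
  by_cases hm : I = maximalIdeal R
  · by_contra hcon
    push Not at hcon
    obtain ⟨h, hh, hhy⟩ := exists_functional
      (LinearMap.range ((d (s+1)).restrictScalars R) ⊔ maximalIdeal R • (⊤ : Submodule R (P (s+1))))
      le_sup_right y (by
        intro hmem
        obtain ⟨_, ⟨u, rfl⟩, v, hv, h⟩ := Submodule.mem_sup.1 hmem
        refine hcon u ?_
        rw [← h, hm]
        simpa using hv)
    obtain ⟨k, hk⟩ := hex h (by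
      ext x; exact hh _ (Submodule.mem_sup_left ⟨x, rfl⟩))
    apply hhy
    rw [← hk]
    obtain ⟨n, a, z, ha, hz⟩ := exists_sum_of_mem_smul_top' _ _ hy
    rw [LinearMap.comp_apply, LinearMap.restrictScalars_apply, hz, map_sum]
    refine Finset.sum_eq_zero fun i _ => ?_
    rw [map_smul, Algebra.smul_def]
    have : algebraMap R (ResidueField R) (a i) = 0 := by
      rw [ResidueField.algebraMap_eq, residue_eq_zero_iff, ← hm]; exact ha i
    rw [this, zero_mul]
  · have hlt : I < maximalIdeal R := lt_of_le_of_ne (le_maximalIdeal hI) hm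
    obtain ⟨x, hx, hxI⟩ := SetLike.exists_of_lt hlt
    have h1 : I < I ⊔ Ideal.span {x} := lt_of_le_of_ne le_sup_left fun h => hxI (by
      rw [h]; exact Ideal.mem_sup_right (Ideal.mem_span_singleton_self x))
    have hcolon : ∀ r, x * r ∈ I → r ∈ I.colon {x} := fun r hr => by
      rw [Submodule.mem_colon_singleton, smul_eq_mul, mul_comm]; exact hr
    have key : ∀ y : P (s+1), d s y ∈ I • (⊤ : Submodule R (P s)) → ∃ u, ∃ a ∈ I • (⊤ : Submodule R (P (s+1))),
        ∃ z, y = d (s+1) u + a + x • z ∧ d s z ∈ (I.colon {x}) • (⊤ : Submodule R (P s)) := by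
      intro y hy
      obtain ⟨u, hu⟩ := ih _ h1 y (Submodule.smul_mono_left h1.le hy)
      obtain ⟨a, ha, z, hz⟩ := mem_sup_smul I x _ hu
      have hyz : y = d (s+1) u + a + x • z := by rw [add_assoc, ← hz]; abel
      refine ⟨u, a, ha, z, hyz, flat_colon I _ x hcolon _ ?_⟩
      have h2 : d s a ∈ I • (⊤ : Submodule R (P s)) :=
        (mem_MI (A := A) _ _).1 (map_MI I (d s) a ((mem_MI _ _).2 ha))
      rw [hyz, map_add, map_add, hdd, zero_add, ← algebraMap_smul A x z, map_smul, algebraMap_smul] at hy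
      exact (Submodule.add_mem_iff_right _ h2).1 hy
    by_cases hc : I.colon {x} = I
    · have hG : GA π P d s I := GA_all π hdd h0 hP s I
      have := GoodSQ.nakayama hπ hG (algebraMap R A x) (hloc x hx) (by
        intro y hy
        obtain ⟨u, a, ha, z, hyz, hz⟩ := key y ((mem_MI (A := A) _ _).1 hy)
        refine ⟨z, (mem_MI (A := A) _ _).2 (by rw [hc] at hz; exact hz), ?_⟩
        rw [hyz, algebraMap_smul, add_sub_cancel_right]
        exact Submodule.add_mem_sup ⟨u, rfl⟩ ((mem_MI (A := A) _ _).2 ha))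
      obtain ⟨_, ⟨u, rfl⟩, v, hv, h⟩ := Submodule.mem_sup.1 (this ((mem_MI (A := A) _ _).2 hy))
      refine ⟨u, ?_⟩
      rw [← h, add_sub_cancel_left]
      exact (mem_MI (A := A) _ _).1 hv
    · have h2 : I < I.colon {x} := lt_of_le_of_ne (fun r hr => hcolon r (Ideal.mul_mem_left I _ hr)) (Ne.symm hc)
      obtain ⟨u, a, ha, z, hyz, hz⟩ := key y hy
      obtain ⟨u', hu'⟩ := ih _ h2 z hz
      refine ⟨u + x • u', ?_⟩
      have : y - d (s+1) (u + x • u') = a + x • (z - d (s+1) u') := by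
        rw [hyz, map_add, ← algebraMap_smul A x u', map_smul, algebraMap_smul, smul_sub]; abel
      rw [this]
      exact Submodule.add_mem _ ha (smul_mem_of_colon I x _ hu')

/-- Steps 2 and 3 combined. -/
theorem ExAt_of_residue [IsNoetherianRing R] [IsLocalRing R] [IsLocalRing B] [∀ i, Module.Projective R (P i)]
    (hπ : Function.Surjective π)
    (hloc : ∀ x ∈ maximalIdeal R, π (algebraMap R A x) ∈ maximalIdeal B)
    (hdd : ∀ i x, d i (d (i+1) x) = 0) (h0 : Subsingleton (P 1))
    (hP : ∀ i, GoodSQ π (LinearMap.ker (d i)) (LinearMap.range (d (i+1)))) (s : ℕ)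
    (hex : ExAt ((d (s+1)).restrictScalars R) ((d s).restrictScalars R) (ResidueField R))
    (hacyc : ∀ i, s ≤ i → Function.Exact (d (i+1)) (d i)) :
    ∃ D : ℕ, ∀ j, D ≤ j → ∀ (N : Type u) [AddCommGroup N] [Module R N],
      ExAt ((d (j+1)).restrictScalars R) ((d j).restrictScalars R) N := by
  obtain ⟨c, D, hc, hD⟩ := exists_codim R
  refine ⟨s + D, fun j hj N _ _ => ?_⟩
  have hfl : Module.Flat R (P s ⧸ LinearMap.range ((d s).restrictScalars R)) := by
    refine flat_of_pure ((d s).restrictScalars R) (Submodule.mkQ _) (Submodule.mkQ_surjective _) ?_ ?_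
    · rw [LinearMap.exact_iff]; simp
    · intro I q hq
      obtain ⟨u, hu⟩ := TI π P d hπ hloc hdd h0 hP s hex I q hq
      refine ⟨_, hu, ?_⟩
      simp [hdd]
  obtain ⟨k, rfl⟩ := Nat.exists_eq_add_of_le (show s ≤ j by omega)
  exact ExAt_of_flat (fun i => P (s + i)) (fun i => (d (s + i)).restrictScalars R)
    (fun i => hacyc (s+i) (by omega)) hfl c hc D hD k (by omega) N

end complex
end part6

section part7
section tw
variable {R : Type u} [CommRing R]

/-- restriction of scalars along an endomorphism, as a type synonym -/
def Tw (_ψ : R →+* R) (N : Type u) : Type u := N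
instance (ψ : R →+* R) (N : Type u) [AddCommGroup N] : AddCommGroup (Tw ψ N) := inferInstanceAs (AddCommGroup N)
instance (ψ : R →+* R) (N : Type u) [AddCommGroup N] [Module R N] : Module R (Tw ψ N) := Module.compHom N ψ

lemma Tw_smul (ψ : R →+* R) (N : Type u) [AddCommGroup N] [Module R N] (r : R) (x : N) :
    (r • (show Tw ψ N from x) : Tw ψ N) = (ψ r • x : N) := rfl

def Tw.map (ψ : R →+* R) {N N' : Type u} [AddCommGroup N] [Module R N] [AddCommGroup N'] [Module R N']
    (f : N →ₗ[R] N') : Tw ψ N →ₗ[R] Tw ψ N' where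
  toFun := f
  map_add' := f.map_add
  map_smul' r x := f.map_smul (ψ r) x

lemma ExAt.les {P3 P2 P1 P0 : Type u} [AddCommGroup P3] [Module R P3] [AddCommGroup P2] [Module R P2]
    [AddCommGroup P1] [Module R P1] [AddCommGroup P0] [Module R P0] [Module.Projective R P1]
    {d2 : P3 →ₗ[R] P2} {d1 : P2 →ₗ[R] P1} {d0 : P1 →ₗ[R] P0} (hdd : ∀ x, d1 (d2 x) = 0)
    {N1 N2 N3 : Type u} [AddCommGroup N1] [Module R N1] [AddCommGroup N2] [Module R N2] [AddCommGroup N3] [Module R N3]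
    (i : N1 →ₗ[R] N2) (p : N2 →ₗ[R] N3) (hi : Function.Injective i) (hp : Function.Surjective p)
    (hip : Function.Exact i p) (h2 : ExAt d1 d0 N2) (h1 : ExAt d2 d1 N1) : ExAt d1 d0 N3 := by
  intro h hh
  obtain ⟨h', hh'⟩ := Module.projective_lifting_property p h hp
  have hr : ∀ x, h' (d1 x) ∈ LinearMap.range i := fun x => (hip _).1 (by
    have := LinearMap.congr_fun hh' (d1 x)
    rw [LinearMap.comp_apply] at this
    rw [this]; exact LinearMap.congr_fun hh x)
  let E := LinearEquiv.ofInjective i hi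
  let e : P2 →ₗ[R] N1 := E.symm.toLinearMap ∘ₗ LinearMap.codRestrict _ (h' ∘ₗ d1) hr
  have he : ∀ x, i (e x) = h' (d1 x) := by
    intro x
    have : E (e x) = LinearMap.codRestrict _ (h' ∘ₗ d1) hr x := by simp [e]
    exact congrArg Subtype.val this
  obtain ⟨k, hk⟩ := h1 e (by
    ext x; apply hi; rw [LinearMap.comp_apply, he, hdd]; simp)
  obtain ⟨l, hl⟩ := h2 (h' - i ∘ₗ k) (by
    ext x
    have := LinearMap.congr_fun hk x
    simp only [LinearMap.comp_apply] at this
    simp [this, he])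
  refine ⟨p ∘ₗ l, ?_⟩
  ext x
  have h3 := LinearMap.congr_fun hl x
  have h4 := LinearMap.congr_fun hh' x
  simp only [LinearMap.comp_apply, LinearMap.sub_apply] at h3 h4 ⊢
  rw [h3, map_sub, h4, hip.apply_apply_eq_zero, sub_zero]

lemma ExAt.equiv {P2 P1 P0 : Type u} [AddCommGroup P2] [Module R P2]
    [AddCommGroup P1] [Module R P1] [AddCommGroup P0] [Module R P0]
    {d1 : P2 →ₗ[R] P1} {d0 : P1 →ₗ[R] P0}
    {N1 N2 : Type u} [AddCommGroup N1] [Module R N1] [AddCommGroup N2] [Module R N2]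
    (i : N1 →ₗ[R] N2) (p : N2 →ₗ[R] N1) (hip : ∀ x, i (p x) = x) (h1 : ExAt d1 d0 N1) : ExAt d1 d0 N2 := by
  intro h hh
  obtain ⟨k, hk⟩ := h1 (p ∘ₗ h) (by rw [LinearMap.comp_assoc, hh, LinearMap.comp_zero])
  refine ⟨i ∘ₗ k, ?_⟩
  rw [LinearMap.comp_assoc, hk]
  ext x; simp [hip]

/-- ideals generated by weakly regular sequences in the maximal ideal -/
inductive RegI [IsLocalRing R] : ℕ → Ideal R → Prop
  | zero : RegI 0 ⊥
  | succ (r : ℕ) (I : Ideal R) (x : R) (h : RegI r I) (hx : x ∈ maximalIdeal R)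
      (hreg : ∀ y, x * y ∈ I → y ∈ I) : RegI (r+1) (I ⊔ Ideal.span {x})

def mulQ (I : Ideal R) (x : R) : (R ⧸ I) →ₗ[R] (R ⧸ I) := x • LinearMap.id
def toQ (I : Ideal R) (x : R) : (R ⧸ I) →ₗ[R] (R ⧸ (I ⊔ Ideal.span {x})) := Submodule.factor le_sup_left

lemma mulQ_inj (I : Ideal R) (x : R) (hreg : ∀ y, x * y ∈ I → y ∈ I) : Function.Injective (mulQ I x) := by
  rw [← LinearMap.ker_eq_bot, LinearMap.ker_eq_bot']
  intro y hy
  obtain ⟨y, rfl⟩ := Ideal.Quotient.mk_surjective y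
  rw [Ideal.Quotient.eq_zero_iff_mem]
  apply hreg
  rw [← Ideal.Quotient.eq_zero_iff_mem, map_mul]
  exact hy

lemma toQ_surj (I : Ideal R) (x : R) : Function.Surjective (toQ I x) := by
  intro y
  obtain ⟨y, rfl⟩ := Ideal.Quotient.mk_surjective y
  exact ⟨Ideal.Quotient.mk _ y, rfl⟩

lemma mulQ_toQ_exact (I : Ideal R) (x : R) : Function.Exact (mulQ I x) (toQ I x) := by
  intro y
  obtain ⟨y, rfl⟩ := Ideal.Quotient.mk_surjective y
  constructor
  · intro h
    have h1 : y ∈ I ⊔ Ideal.span {x} := Ideal.Quotient.eq_zero_iff_mem.1 h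
    obtain ⟨a, ha, b, hb, rfl⟩ := Submodule.mem_sup.1 h1
    obtain ⟨c, rfl⟩ := Ideal.mem_span_singleton'.1 hb
    refine ⟨Ideal.Quotient.mk _ c, ?_⟩
    change Ideal.Quotient.mk I (x * c) = _
    rw [Ideal.Quotient.eq, mul_comm]
    simpa using ha
  · rintro ⟨z, hz⟩
    obtain ⟨z, rfl⟩ := Ideal.Quotient.mk_surjective z
    rw [← hz]
    change Ideal.Quotient.mk (I ⊔ Ideal.span {x}) (x * z) = 0
    rw [Ideal.Quotient.eq_zero_iff_mem]
    exact Ideal.mem_sup_right (Ideal.mul_mem_right _ _ (Ideal.mem_span_singleton_self x))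

variable [IsLocalRing R]
variable (P : ℕ → Type u) [∀ i, AddCommGroup (P i)] [∀ i, Module R (P i)] [∀ i, Module.Projective R (P i)]
  (d : ∀ i, P (i+1) →ₗ[R] P i)

lemma RegI.reduce (hdd : ∀ i x, d i (d (i+1) x) = 0) (ψ : R →+* R) {r : ℕ} {I : Ideal R} (hI : RegI r I) :
    ∀ s : ℕ, (∀ j ≤ r, ExAt (d (s+j+1)) (d (s+j)) (Tw ψ R)) → ExAt (d (s+1)) (d s) (Tw ψ (R ⧸ I)) := by
  induction hI with
  | zero =>
    intro s h
    let E := (Submodule.quotEquivOfEqBot (⊥ : Ideal R) rfl)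
    exact ExAt.equiv (Tw.map ψ E.symm.toLinearMap) (Tw.map ψ E.toLinearMap) (fun x => E.symm_apply_apply x)
      (h 0 le_rfl)
  | succ r I x h hx hreg ih =>
    intro s hs
    refine ExAt.les (d2 := d (s+1+1)) (hdd (s+1)) (Tw.map ψ (mulQ I x)) (Tw.map ψ (toQ I x)) (mulQ_inj I x hreg) (toQ_surj I x)
      (mulQ_toQ_exact I x) (ih s fun j hj => hs j (by omega)) (ih (s+1) fun j hj => ?_)
    have := hs (j+1) (by omega)
    rwa [show s + 1 + j = s + (j + 1) by omega]

lemma exists_RegI [IsNoetherianRing R] : ∃ (r : ℕ) (I : Ideal R) (z : R), RegI r I ∧ z ∉ I ∧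
    ∀ x ∈ maximalIdeal R, x * z ∈ I := by
  have hle : ∀ {r : ℕ} {I : Ideal R}, RegI r I → I ≤ maximalIdeal R := by
    intro r I h
    induction h with
    | zero => exact bot_le
    | succ r I x h hx hreg ih => exact sup_le ih ((Ideal.span_singleton_le_iff_mem _).2 hx)
  obtain ⟨I, ⟨r, hr⟩, hmax⟩ := set_has_maximal_iff_noetherian.2 (inferInstanceAs (IsNoetherian R R))
    {I : Ideal R | ∃ r, RegI r I} ⟨⊥, 0, RegI.zero⟩
  refine ⟨r, I, ?_⟩
  have hzd : ∀ x ∈ maximalIdeal R, ∃ y, x * y ∈ I ∧ y ∉ I := by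
    intro x hx
    by_contra hcon
    push Not at hcon
    refine hmax _ ⟨r+1, RegI.succ r I x hr hx hcon⟩ (lt_of_le_of_ne le_sup_left fun h => ?_)
    have hxI : x ∈ I := by rw [h]; exact Ideal.mem_sup_right (Ideal.mem_span_singleton_self x)
    have : (1:R) ∈ I := hcon 1 (by simpa using hxI)
    exact (maximalIdeal.isMaximal R).ne_top ((Ideal.eq_top_iff_one _).2 (hle hr this))
  have hsub : (maximalIdeal R : Set R) ⊆ ⋃ p ∈ associatedPrimes R (R ⧸ I), (p : Set R) := by
    rw [biUnion_associatedPrimes_eq_zero_divisors]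
    intro x hx
    obtain ⟨y, hy, hyI⟩ := hzd x hx
    refine ⟨Ideal.Quotient.mk I y, fun h => hyI (Ideal.Quotient.eq_zero_iff_mem.1 h), ?_⟩
    change Ideal.Quotient.mk I (x * y) = 0
    exact Ideal.Quotient.eq_zero_iff_mem.2 hy
  obtain ⟨p, hp, hmp⟩ := (Ideal.subset_union_prime_finite (associatedPrimes.finite R (R ⧸ I)) (f := id) ⊥ ⊥
    (fun p hp _ _ => IsAssociatedPrime.isPrime hp)).1 hsub
  obtain ⟨hpp, z, hz⟩ := isAssociatedPrime_iff.1 hp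
  obtain ⟨z, rfl⟩ := Ideal.Quotient.mk_surjective z
  have hmem : ∀ x, x ∈ p ↔ x * z ∈ I := by
    intro x
    rw [hz, Submodule.mem_colon_singleton, Submodule.mem_bot, ← Ideal.Quotient.eq_zero_iff_mem]
    rfl
  refine ⟨z, hr, fun hzI => ?_, fun x hx => ?_⟩
  · exact hpp.ne_top ((Ideal.eq_top_iff_one _).2 ((hmem 1).2 (by simpa using hzI)))
  · exact (hmem x).1 (hmp hx)

lemma residue_of_Tw {P2 P1 P0 : Type u} [AddCommGroup P2] [Module R P2]
    [AddCommGroup P1] [Module R P1] [AddCommGroup P0] [Module R P0]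
    {d1 : P2 →ₗ[R] P1} {d0 : P1 →ₗ[R] P0} (ψ : R →+* R) (I : Ideal R) (z : R)
    (hz : ∀ x ∈ maximalIdeal R, x * z ∈ I) (N : ℕ) (hN : 1 ≤ N)
    (hψ : ∀ x ∈ maximalIdeal R, ψ x ∈ maximalIdeal R ^ N) (hzN : z ∉ maximalIdeal R ^ N ⊔ I)
    (h1 : ExAt d1 d0 (Tw ψ (R ⧸ I))) : ExAt d1 d0 (ResidueField R) := by
  let i0 : R →ₗ[R] Tw ψ (R ⧸ I) := LinearMap.toSpanSingleton R _ (show Tw ψ (R ⧸ I) from Ideal.Quotient.mk I z)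
  have hi0 : ∀ r, i0 r = (show Tw ψ (R ⧸ I) from Ideal.Quotient.mk I (ψ r * z)) := fun r => rfl
  let ι : ResidueField R →ₗ[R] Tw ψ (R ⧸ I) := Submodule.liftQ (maximalIdeal R) i0 (by
    intro x hx
    rw [LinearMap.mem_ker, hi0]
    exact Ideal.Quotient.eq_zero_iff_mem.2 (hz _ (Ideal.pow_le_self (by omega) (hψ x hx))))
  have hι : ∀ r, ι (residue R r) = i0 r := fun r => rfl
  obtain ⟨h, -, hh⟩ := exists_functional (Y := Tw ψ (R ⧸ I)) (maximalIdeal R • ⊤) le_rfl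
    (show Tw ψ (R ⧸ I) from Ideal.Quotient.mk I z) (by
      intro hmem
      have : ∀ y : Tw ψ (R ⧸ I), y ∈ (maximalIdeal R • ⊤ : Submodule R (Tw ψ (R ⧸ I))) →
          (show R ⧸ I from y) ∈ (maximalIdeal R ^ N).map (Ideal.Quotient.mk I) := by
        intro y hy
        induction hy using Submodule.smul_induction_on' with
        | smul r hr n hn =>
          exact Ideal.mul_mem_right (show R ⧸ I from n) _ (Ideal.mem_map_of_mem _ (hψ r hr))
        | add x hx y hy h1 h2 => exact Ideal.add_mem _ h1 h2
      have h2 := this _ hmem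
      rw [Ideal.mem_map_iff_of_surjective _ Ideal.Quotient.mk_surjective] at h2
      obtain ⟨w, hw, hwz⟩ := h2
      have h3 : w - z ∈ I := Ideal.Quotient.eq.1 hwz
      apply hzN
      have : z = w + -(w - z) := by ring
      rw [this]
      exact Ideal.add_mem _ (Ideal.mem_sup_left hw) (Ideal.mem_sup_right (I.neg_mem h3)))
  set c : ResidueField R := h (show Tw ψ (R ⧸ I) from Ideal.Quotient.mk I z) with hc
  have hhi : ∀ r, h (ι r) = r * c := by
    intro r
    obtain ⟨r, rfl⟩ := IsLocalRing.residue_surjective r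
    rw [hι]
    change h (r • _) = _
    rw [map_smul, Algebra.smul_def]; rfl
  obtain ⟨c', hc'⟩ := IsLocalRing.residue_surjective c⁻¹
  refine ExAt.equiv (c' • h) ι (fun x => ?_) h1
  rw [LinearMap.smul_apply, hhi, Algebra.smul_def]
  change residue R c' * _ = _
  rw [hc']; field_simp

lemma exists_not_mem_pow [IsNoetherianRing R] (I : Ideal R) (z : R) (hz : z ∉ I) :
    ∃ N : ℕ, 1 ≤ N ∧ z ∉ maximalIdeal R ^ N ⊔ I := by
  by_contra hcon
  push Not at hcon
  have : IsHausdorff (maximalIdeal R) (R ⧸ I) := inferInstance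
  have h := this.haus (Ideal.Quotient.mk I z) (fun n => by
    rw [SModEq.zero]
    have h1 : z ∈ maximalIdeal R ^ n ⊔ I := by
      rcases Nat.eq_zero_or_pos n with rfl | hn
      · simp
      · exact hcon n hn
    obtain ⟨a, ha, b, hb, rfl⟩ := Submodule.mem_sup.1 h1
    rw [map_add, Ideal.Quotient.eq_zero_iff_mem.2 hb, add_zero]
    have : Ideal.Quotient.mk I a = a • (1 : R ⧸ I) := by rw [Algebra.smul_def, mul_one]; rfl
    rw [this]
    exact Submodule.smul_mem_smul ha trivial)
  exact hz (Ideal.Quotient.eq_zero_iff_mem.1 h)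

lemma contracting_pow (φ : R →+* R) (hcontr : ∃ N₀ : ℕ, ∀ n : ℕ, N₀ ≤ n → ∀ x ∈ maximalIdeal R,
      (φ ^ n) x ∈ (maximalIdeal R) ^ 2) (N : ℕ) :
    ∃ n0 : ℕ, ∀ n, n0 ≤ n → ∀ x ∈ maximalIdeal R, (φ ^ n) x ∈ maximalIdeal R ^ N := by
  obtain ⟨N₀, hN⟩ := hcontr
  have hmap : (maximalIdeal R).map (φ ^ N₀) ≤ maximalIdeal R ^ 2 := Ideal.map_le_iff_le_comap.2 (hN N₀ le_rfl)
  induction N with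
  | zero => exact ⟨0, by simp⟩
  | succ N ih =>
    obtain ⟨n0, h0⟩ := ih
    refine ⟨n0 + N₀ + N₀, fun n hn x hx => ?_⟩
    rcases Nat.eq_zero_or_pos N with rfl | hN'
    · simpa using Ideal.pow_le_self (two_ne_zero) (hN n (by omega) x hx)
    obtain ⟨k, rfl⟩ : ∃ k, n = N₀ + k := ⟨n - N₀, by omega⟩
    rw [pow_add φ]
    change (φ ^ N₀) ((φ ^ k) x) ∈ maximalIdeal R ^ (N+1)
    have h1 := Ideal.mem_map_of_mem (φ ^ N₀) (h0 k (by omega) x hx)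
    rw [Ideal.map_pow] at h1
    have h2 := Ideal.pow_right_mono hmap N h1
    rw [← pow_mul] at h2
    exact Ideal.pow_le_pow_right (by omega) h2
end tw
end part7

section part8
section dep
variable {R : Type u} [CommRing R]

lemma Ext_subsingleton_iff_zero {X : ModuleCat.{u} R} (Q : ProjectiveResolution X) (N : ModuleCat.{u} R) :
    Subsingleton (((Ext R (ModuleCat.{u} R) 0).obj (Opposite.op X)).obj N) ↔
      ∀ h : Q.complex.X 0 →ₗ[R] N, h ∘ₗ (Q.complex.d 1 0).hom = 0 → h = 0 := by
  rw [← ModuleCat.isZero_iff_subsingleton, (Q.isoExt 0 N).isZero_iff, ← HomologicalComplex.exactAt_iff_isZero_homology,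
    HomologicalComplex.exactAt_iff' _ 0 0 1 (by simp) (by simp), ShortComplex.moduleCat_exact_iff]
  constructor
  · intro H h hh
    obtain ⟨x1, hx⟩ := H (ModuleCat.ofHom h) (by
      change Q.complex.d 1 0 ≫ ModuleCat.ofHom h = 0
      ext1; exact hh)
    have h0 : ((Q.complex.linearYonedaObj R N).d 0 0) = 0 := HomologicalComplex.shape _ _ _ (by simp)
    have h1 : ModuleCat.ofHom h = 0 := by
      rw [← hx]
      change ((Q.complex.linearYonedaObj R N).d 0 0) x1 = 0
      rw [h0]; rfl
    exact congrArg ModuleCat.Hom.hom h1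
  · intro H x2 hx2
    have := H (show Q.complex.X 0 ⟶ N from x2).hom (congrArg ModuleCat.Hom.hom (show Q.complex.d 1 0 ≫ (show Q.complex.X 0 ⟶ N from x2) = 0 from hx2))
    refine ⟨0, ?_⟩
    rw [map_zero]
    change (0 : Q.complex.X 0 ⟶ N) = x2
    ext1; exact this.symm

lemma Ext_subsingleton_iff_succ {X : ModuleCat.{u} R} (Q : ProjectiveResolution X) (N : ModuleCat.{u} R) (n : ℕ) :
    Subsingleton (((Ext R (ModuleCat.{u} R) (n+1)).obj (Opposite.op X)).obj N) ↔
      ExAt (Q.complex.d (n+2) (n+1)).hom (Q.complex.d (n+1) n).hom N := by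
  rw [← ModuleCat.isZero_iff_subsingleton, (Q.isoExt (n+1) N).isZero_iff, ← HomologicalComplex.exactAt_iff_isZero_homology,
    HomologicalComplex.exactAt_iff' _ n (n+1) (n+2) (by simp) (by simp), ShortComplex.moduleCat_exact_iff]
  constructor
  · intro H h hh
    obtain ⟨x1, hx⟩ := H (ModuleCat.ofHom h) (by
      change Q.complex.d (n+2) (n+1) ≫ ModuleCat.ofHom h = 0
      ext1; exact hh)
    exact ⟨(show Q.complex.X n ⟶ N from x1).hom, congrArg ModuleCat.Hom.hom (show Q.complex.d (n+1) n ≫ (show Q.complex.X n ⟶ N from x1) = _ from hx)⟩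
  · intro H x2 hx2
    obtain ⟨k, hk⟩ := H (show Q.complex.X (n+1) ⟶ N from x2).hom (congrArg ModuleCat.Hom.hom (show Q.complex.d (n+2) (n+1) ≫ (show Q.complex.X (n+1) ⟶ N from x2) = 0 from hx2))
    refine ⟨ModuleCat.ofHom k, ?_⟩
    change Q.complex.d (n+1) n ≫ ModuleCat.ofHom k = (show Q.complex.X (n+1) ⟶ N from x2)
    ext1; exact hk

lemma exists_homotopy {X : ModuleCat.{u} R} (Q : ProjectiveResolution X) (x : R) (hx : x • 𝟙 X = 0) :
    Nonempty (Homotopy (x • 𝟙 Q.complex) 0) := by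
  refine ⟨ProjectiveResolution.liftHomotopyZero _ ?_⟩
  have h1 : ((ChainComplex.single₀ (ModuleCat.{u} R)).map (x • 𝟙 X)) = x • 𝟙 _ := by
    apply HomologicalComplex.from_single_hom_ext
    simp
    rfl
  have h2 : x • 𝟙 ((ChainComplex.single₀ (ModuleCat.{u} R)).obj X) = 0 := by rw [← h1, hx, Functor.map_zero]
  calc (x • 𝟙 Q.complex) ≫ Q.π = Q.π ≫ (x • 𝟙 ((ChainComplex.single₀ (ModuleCat.{u} R)).obj X)) := by simp
    _ = 0 := by rw [h2, comp_zero]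

section abs
variable [IsLocalRing R]
variable (P : ℕ → Type u) [∀ i, AddCommGroup (P i)] [∀ i, Module R (P i)] [∀ i, Module.Projective R (P i)]
  (d : ∀ i, P (i+1) →ₗ[R] P i)

lemma ExAt_raise (hdd : ∀ i x, d i (d (i+1) x) = 0) (h0 : Subsingleton (P 0))
    (x : R) (hx : ∃ h : ∀ i, P i →ₗ[R] P (i+1), ∀ i y, x • y = d (i+1) (h (i+1) y) + h i (d i y))
    {N N' : Type u} [AddCommGroup N] [Module R N] [AddCommGroup N'] [Module R N']
    (i : N →ₗ[R] N) (p : N →ₗ[R] N') (hi : Function.Injective i) (hp : Function.Surjective p)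
    (hip : Function.Exact i p) (hxi : ∀ y, i y = x • y) (n : ℕ)
    (hN : ∀ m, n = m + 1 → ExAt (d (m+1)) (d m) N') : ExAt (d (n+1)) (d n) N := by
  intro f hf
  obtain ⟨h, hh⟩ := hx
  have hf' : ∀ y, f (d (n+1) y) = 0 := fun y => LinearMap.congr_fun hf y
  let g : P n →ₗ[R] N := f ∘ₗ h n
  have hg : ∀ y, i (f y) = g (d n y) := by
    intro y
    rw [hxi, ← map_smul, hh, map_add, hf', zero_add]; rfl
  cases n with
  | zero =>
    refine ⟨0, ?_⟩
    ext y
    apply hi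
    rw [hg, Subsingleton.elim (d 0 y) 0]; simp
  | succ m =>
    obtain ⟨l, hl⟩ := hN m rfl (p ∘ₗ g) (by
      ext y
      rw [LinearMap.comp_apply, LinearMap.comp_apply, ← hg]
      exact hip.apply_apply_eq_zero _)
    obtain ⟨l', hl'⟩ := Module.projective_lifting_property p l hp
    have hr : ∀ y, (g - l' ∘ₗ d m) y ∈ LinearMap.range i := fun y => (hip _).1 (by
      have h1 := LinearMap.congr_fun hl y
      have h2 := LinearMap.congr_fun hl' (d m y)
      simp only [LinearMap.comp_apply, LinearMap.sub_apply, map_sub] at h1 h2 ⊢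
      rw [h2, h1, sub_self])
    let E := LinearEquiv.ofInjective i hi
    let e : P (m+1) →ₗ[R] N := E.symm.toLinearMap ∘ₗ LinearMap.codRestrict _ (g - l' ∘ₗ d m) hr
    have he : ∀ x, i (e x) = (g - l' ∘ₗ d m) x := by
      intro x
      have : E (e x) = LinearMap.codRestrict _ (g - l' ∘ₗ d m) hr x := by simp [e]
      exact congrArg Subtype.val this
    refine ⟨e, ?_⟩
    ext y
    apply hi
    rw [LinearMap.comp_apply, he, hg]
    simp [hdd]

lemma RegI.raise (hdd : ∀ i x, d i (d (i+1) x) = 0) (h0 : Subsingleton (P 0))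
    (hx : ∀ x ∈ maximalIdeal R, ∃ h : ∀ i, P i →ₗ[R] P (i+1), ∀ i y, x • y = d (i+1) (h (i+1) y) + h i (d i y))
    {r : ℕ} {I : Ideal R} (hI : RegI r I) :
    ∀ q, (∀ n < q, ExAt (d (n+1)) (d n) (R ⧸ I)) → ∀ n < q + r, ExAt (d (n+1)) (d n) R := by
  induction hI with
  | zero =>
    intro q h n hn
    let E := (Submodule.quotEquivOfEqBot (⊥ : Ideal R) rfl)
    exact ExAt.equiv E.toLinearMap E.symm.toLinearMap (fun x => E.apply_symm_apply x) (h n hn)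
  | succ r I x h hxm hreg ih =>
    intro q hq n hn
    refine ih (q+1) (fun n hn => ?_) n (by omega)
    refine ExAt_raise P d hdd h0 x (hx x hxm) (mulQ I x) (toQ I x) (mulQ_inj I x hreg) (toQ_surj I x)
      (mulQ_toQ_exact I x) (fun y => rfl) n (fun m hm => hq m (by omega))
end abs

lemma le_depthNat [IsLocalRing R] (r : ℕ) (I : Ideal R) (z : R) (hI : RegI r I) (hzI : z ∉ I)
    (hz : ∀ x ∈ maximalIdeal R, x * z ∈ I) : 
    r ≤ sInf {n : ℕ | ¬ Subsingleton (((Ext R (ModuleCat.{u} R) n).obj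
    (Opposite.op (ModuleCat.of R (ResidueField R)))).obj (ModuleCat.of R R))} := by
  let Q := projectiveResolution (ModuleCat.of R (ResidueField R))
  let C' := ChainComplex.augment Q.complex (0 : Q.complex.X 0 ⟶ ModuleCat.of R PUnit.{u+1}) (by simp)
  let P : ℕ → Type u := fun i => C'.X i
  let d : ∀ i, P (i+1) →ₗ[R] P i := fun i => (C'.d (i+1) i).hom
  have hproj : ∀ i, Module.Projective R (P i) := by
    intro i
    cases i with
    | zero => exact inferInstanceAs (Module.Projective R PUnit.{u+1})
    | succ i => exact (IsProjective.iff_projective (Q.complex.X i)).2 (Q.projective i)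
  have hdd : ∀ i x, d i (d (i+1) x) = 0 := by
    intro i x
    exact ConcreteCategory.congr_hom (C'.d_comp_d (i+2) (i+1) i) x
  have hE : ∀ (n : ℕ) (N : Type u) [AddCommGroup N] [Module R N], Subsingleton (((Ext R (ModuleCat.{u} R) n).obj
    (Opposite.op (ModuleCat.of R (ResidueField R)))).obj (ModuleCat.of R N)) ↔ ExAt (d (n+1)) (d n) N := by
    intro n N _ _
    cases n with
    | zero =>
      rw [Ext_subsingleton_iff_zero Q]
      constructor
      · intro H h hh
        exact ⟨0, by rw [H h hh]; rfl⟩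
      · intro H h hh
        obtain ⟨k, hk⟩ := H h hh
        rw [← hk]; ext y; exact map_zero k
    | succ n => exact Ext_subsingleton_iff_succ Q _ n
  have hx : ∀ x ∈ maximalIdeal R, ∃ h : ∀ i, P i →ₗ[R] P (i+1), ∀ i y, x • y = d (i+1) (h (i+1) y) + h i (d i y) := by
    intro x hx
    obtain ⟨H⟩ := exists_homotopy Q x (by
      ext y
      obtain ⟨y, rfl⟩ := IsLocalRing.residue_surjective y
      change x • (residue R y) = 0
      rw [Algebra.smul_def]
      change residue R x * _ = 0
      rw [(residue_eq_zero_iff x).2 hx, zero_mul])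
    let h : ∀ i, P i →ₗ[R] P (i+1) := fun i => match i with
      | 0 => 0
      | i+1 => (H.hom i (i+1)).hom
    refine ⟨h, fun i y => ?_⟩
    have h1 := H.comm i
    cases i with
    | zero =>
      rw [Homotopy.dNext_zero_chainComplex, Homotopy.prevD_chainComplex] at h1
      have h2 := ConcreteCategory.congr_hom h1 y
      simp only [zero_add, HomologicalComplex.zero_f, add_zero] at h2
      refine Eq.trans h2 ?_
      symm
      change (Q.complex.d 1 0).hom ((H.hom 0 1).hom y) + 0 = _
      rw [add_zero]; rfl
    | succ i =>
      rw [Homotopy.dNext_succ_chainComplex, Homotopy.prevD_chainComplex] at h1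
      have h2 := ConcreteCategory.congr_hom h1 y
      simp only [HomologicalComplex.zero_f, add_zero] at h2
      refine Eq.trans h2 ?_
      exact add_comm ((H.hom i (i+1)).hom ((Q.complex.d (i+1) i).hom y)) ((Q.complex.d (i+1+1) (i+1)).hom ((H.hom (i+1) (i+1+1)).hom y))
  have hne : ∃ n, ¬ ExAt (d (n+1)) (d n) R := by
    by_contra hcon
    push Not at hcon
    have h1 := hI.reduce P d hdd (RingHom.id R) 0 (fun j _ => by
      exact hcon (0 + j))
    let ι : ResidueField R →ₗ[R] Tw (RingHom.id R) (R ⧸ I) := Submodule.liftQ (maximalIdeal R)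
      (LinearMap.toSpanSingleton R _ (show Tw (RingHom.id R) (R ⧸ I) from Ideal.Quotient.mk I z)) (by
        intro x hx
        rw [LinearMap.mem_ker]
        exact Ideal.Quotient.eq_zero_iff_mem.2 (hz _ hx))
    have hι : ι (residue R 1) ≠ 0 := by
      change Ideal.Quotient.mk I (1 * z) ≠ 0
      rw [one_mul]
      exact fun h => hzI (Ideal.Quotient.eq_zero_iff_mem.1 h)
    let π0 : Q.complex.X 0 →ₗ[R] ResidueField R := (Q.π.f 0).hom
    have hπ0 : Function.Surjective π0 := (ModuleCat.epi_iff_surjective (Q.π.f 0)).1 inferInstance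
    obtain ⟨k, hk⟩ := h1 (ι ∘ₗ π0) (by
      ext y
      have := ConcreteCategory.congr_hom Q.complex_d_comp_π_f_zero y
      change ι (π0 ((Q.complex.d 1 0).hom y)) = 0
      rw [show π0 ((Q.complex.d 1 0).hom y) = 0 from this, map_zero])
    obtain ⟨y, hy⟩ := hπ0 (residue R 1)
    apply hι
    rw [← hy]
    refine (LinearMap.congr_fun hk y).symm.trans ?_
    exact map_zero k
  obtain ⟨n, hn⟩ := hne
  refine le_csInf ⟨n, fun h => hn ((hE n R).1 h)⟩ (fun m hm => ?_)
  by_contra hlt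
  push Not at hlt
  exact hm ((hE m R).2 (hI.raise P d hdd (inferInstanceAs (Subsingleton PUnit.{u+1})) hx 0 (by simp) m (by omega)))
end dep
end part8

section part9
section der
open CochainComplex HomComplex
universe v' u'
variable {C : Type u'} [Category.{v'} C] [Abelian C]

lemma derHom_subsingleton_iff [HasDerivedCategory C] (M K : CochainComplex C ℤ) (f : K ⟶ M) [QuasiIso f]
    [K.IsKProjective] (N : C) (i : ℤ)
    (p' p p'' : ℤ) (hp : p + i = 0) (hp' : p' + 1 = p) (hp'' : p + 1 = p'') :
    Subsingleton ((DerivedCategory.Q.obj M) ⟶ (((DerivedCategory.singleFunctor C 0).obj N)⟦i⟧)) ↔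
      ∀ h : K.X p ⟶ N, K.d p' p ≫ h = 0 → ∃ k : K.X p'' ⟶ N, K.d p p'' ≫ k = h := by
  let L := (CochainComplex.singleFunctor C 0).obj N
  have e1 : ((DerivedCategory.Q.obj M) ⟶ (((DerivedCategory.singleFunctor C 0).obj N)⟦i⟧)) ≃
      (DerivedCategory.Qh.obj ((HomotopyCategory.quotient _ _).obj K) ⟶
        DerivedCategory.Qh.obj ((HomotopyCategory.quotient _ _).obj (L⟦i⟧))) :=
    Iso.homCongr ((asIso (DerivedCategory.Q.map f)).symm ≪≫ (DerivedCategory.quotientCompQhIso C).symm.app K)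
      ((CategoryTheory.shiftFunctor (DerivedCategory C) i).mapIso ((DerivedCategory.singleFunctorIsoCompQ C 0).app N) ≪≫
        (DerivedCategory.Q.commShiftIso i).symm.app L ≪≫ (DerivedCategory.quotientCompQhIso C).symm.app (L⟦i⟧))
  have e2 := Equiv.ofBijective _ ((CochainComplex.IsKProjective.Qh_map_bijective K
    ((HomotopyCategory.quotient _ _).obj (L⟦i⟧))).comp (CohomologyClass.toHom_bijective K L i))
  rw [(e1.trans e2.symm).subsingleton_congr]
  constructor
  · intro hs h hh
    have := Subsingleton.elim (CohomologyClass.mk (Cocycle.toSingleMk (q := 0) (n := i) h hp p' hp' hh)) 0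
    rw [CohomologyClass.mk_eq_zero_iff, Cocycle.toSingleMk_mem_coboundaries_iff _ _ _ _ _ p'' hp''] at this
    exact this
  · intro H
    have : ∀ x : CohomologyClass K L i, x = 0 := by
      intro x
      obtain ⟨x, rfl⟩ := x.mk_surjective
      obtain ⟨h, hh, rfl⟩ := Cocycle.toSingleMk_surjective x p hp p' hp'
      rw [CohomologyClass.mk_eq_zero_iff, Cocycle.toSingleMk_mem_coboundaries_iff _ _ _ _ _ p'' hp'']
      exact H h hh
    exact ⟨fun x y => (this x).trans (this y).symm⟩

lemma exists_proj_res [EnoughProjectives C] (M : CochainComplex C ℤ) (b : ℤ) [M.IsLE b] :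
    ∃ (K : CochainComplex C ℤ) (f : K ⟶ M), QuasiIso f ∧ (∀ n, Projective (K.X n)) ∧ K.IsStrictlyLE b := by
  let T := M.truncLE b
  suffices h : ∃ (K : CochainComplex C ℤ) (f : K ⟶ T), QuasiIso f ∧ (∀ n, Projective (K.X n)) ∧ K.IsStrictlyLE b by
    obtain ⟨K, f, _, h1, h2⟩ := h
    exact ⟨K, f ≫ M.ιTruncLE b, inferInstance, h1, h2⟩
  let L := ((opEquivalence C).functor.obj (Opposite.op T))
  have : L.IsStrictlyGE (-b) := by
    rw [isStrictlyGE_iff]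
    intro i hi
    exact (T.isZero_of_isStrictlyLE b _ (by change b < -i; lia)).op
  obtain ⟨I, i, hi, hI, hI'⟩ := CochainComplex.Plus.modelCategoryQuillen.exists_quasiIso_injective L (-b)
  let K := ((opEquivalence C).inverse.obj I).unop
  let g : K ⟶ ((opEquivalence C).inverse.obj L).unop := ((opEquivalence C).inverse.map i).unop
  let f : K ⟶ T := g ≫ ((opEquivalence C).unit.app (Opposite.op T)).unop
  have hK : ∀ n, K.X n = (I.X (-n)).unop := fun n => rfl
  refine ⟨K, f, ?_, ?_, ?_⟩
  · have hg : QuasiIso g := by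
      rw [quasiIso_iff]
      intro n
      rw [quasiIsoAt_iff' g (n-1) n (n+1) (by simp) (by simp)]
      have h1 := (quasiIsoAt_iff' i (-(n+1)) (-n) (-(n-1)) (by simp; ring) (by simp; ring)).1 inferInstance
      exact ShortComplex.quasiIso_unopMap ((HomologicalComplex.shortComplexFunctor' Cᵒᵖ (ComplexShape.up ℤ) (-(n+1)) (-n) (-(n-1))).map i)
    have : IsIso ((opEquivalence C).unit.app (Opposite.op T)).unop := inferInstance
    infer_instance
  · intro n
    have := hI (-n)
    exact inferInstanceAs (Projective (I.X (-n)).unop)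
  · rw [isStrictlyLE_iff]
    intro i hi
    exact (I.isZero_of_isStrictlyGE (-b) (-i) (by lia)).unop
end der
end part9

section part10
section asm
variable {R A B : Type u} [CommRing R] [CommRing A] [CommRing B] (π : A →+* B)

lemma goodSQ_sc (T : ShortComplex (ModuleCat.{u} A)) (hN : IsNoetherian A T.homology)
    (ha : ∀ a, π a = 0 → ∀ y : T.homology, a • y = 0) :
    GoodSQ π (LinearMap.ker T.g.hom) (LinearMap.range T.f.hom) := by
  have e : T.homology ≃ₗ[A] (LinearMap.ker T.g.hom ⧸ LinearMap.range T.moduleCatToCycles) :=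
    T.moduleCatHomologyIso.toLinearEquiv
  have hN' : IsNoetherian A (LinearMap.ker T.g.hom ⧸ LinearMap.range T.moduleCatToCycles) :=
    isNoetherian_of_linearEquiv e
  constructor
  · let q : (LinearMap.ker T.g.hom ⧸ LinearMap.range T.moduleCatToCycles) →ₗ[A] (T.X₂ ⧸ LinearMap.range T.f.hom) :=
      Submodule.mapQ _ _ (LinearMap.ker T.g.hom).subtype (by
        rintro _ ⟨x, rfl⟩
        exact ⟨x, rfl⟩)
    have hq : LinearMap.range q = (LinearMap.ker T.g.hom).map (LinearMap.range T.f.hom).mkQ := by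
      ext y
      constructor
      · rintro ⟨x, rfl⟩
        obtain ⟨x, rfl⟩ := Submodule.mkQ_surjective _ x
        exact ⟨x, x.2, rfl⟩
      · rintro ⟨x, hx, rfl⟩
        exact ⟨Submodule.Quotient.mk ⟨x, hx⟩, rfl⟩
    rw [← hq]
    infer_instance
  · intro a h
    refine ⟨1, fun y hy => ?_⟩
    have h1 : a • (Submodule.Quotient.mk ⟨y, hy⟩ : LinearMap.ker T.g.hom ⧸ LinearMap.range T.moduleCatToCycles) = 0 := by
      obtain ⟨w, hw⟩ := e.surjective (Submodule.Quotient.mk ⟨y, hy⟩)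
      rw [← hw, ← map_smul, ha a h, map_zero]
    rw [← Submodule.Quotient.mk_smul, Submodule.Quotient.mk_eq_zero] at h1
    obtain ⟨x, hx⟩ := h1
    refine ⟨x, ?_⟩
    rw [pow_one]
    exact congrArg Subtype.val hx

lemma goodSQ_complex (K : CochainComplex (ModuleCat.{u} A) ℤ) (p' p p'' : ℤ) (hp' : p' + 1 = p) (hp'' : p + 1 = p'')
    (hN : IsNoetherian A (K.homology p)) (ha : ∀ a, π a = 0 → ∀ y : K.homology p, a • y = 0) :
    GoodSQ π (LinearMap.ker (K.d p p'').hom) (LinearMap.range (K.d p' p).hom) := by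
  have e : K.homology p ≃ₗ[A] (K.sc' p' p p'').homology :=
    (K.homologyIsoSc' p' p p'' (by simp; omega) (by simp; omega)).toLinearEquiv
  refine goodSQ_sc π (K.sc' p' p p'') (isNoetherian_of_linearEquiv e) ?_
  intro a h y
  obtain ⟨w, rfl⟩ := e.surjective y
  rw [← map_smul, ha a h, map_zero]

lemma exact_complex (K : CochainComplex (ModuleCat.{u} A) ℤ) (p' p p'' : ℤ) (hp' : p' + 1 = p) (hp'' : p + 1 = p'')
    (hN : IsZero (K.homology p)) : Function.Exact (K.d p' p).hom (K.d p p'').hom := by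
  rw [← K.exactAt_iff_isZero_homology, K.exactAt_iff' p' p p'' (by simp; omega) (by simp; omega),
    ShortComplex.ShortExact.moduleCat_exact_iff_function_exact] at hN
  exact hN

lemma noeth_restrict (hπ : Function.Surjective π) (H : ModuleCat.{u} B) [IsNoetherian B H] :
    IsNoetherian A ((ModuleCat.restrictScalars π).obj H) := by
  letI : Algebra A B := π.toAlgebra
  letI : Module A H := Module.compHom H π
  haveI : IsScalarTower A B H := ⟨fun a b h => by
    change (π a * b) • h = π a • (b • h)
    rw [mul_smul]⟩
  have : IsNoetherian A H := by
    rw [isNoetherian_iff] 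
    have h2 := (isNoetherian_iff (R := B) (M := H)).1 inferInstance
    let F : Submodule A H → Submodule B H := fun N =>
      { N with smul_mem' := fun b x hx => by
                obtain ⟨a, rfl⟩ := hπ b
                exact N.smul_mem a hx }
    exact (InvImage.wf F h2)
  exact this

lemma projective_restrict [Algebra R A] [Module.Free R A] (X : ModuleCat.{u} A) [Projective X] :
    Projective ((ModuleCat.restrictScalars (algebraMap R A)).obj X) := by
  have h1 : Module.Projective A X := (IsProjective.iff_projective X).2 inferInstance
  letI : Module R X := Module.compHom X (algebraMap R A)
  haveI : IsScalarTower R A X := ⟨fun r a x => by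
    change (r • a) • x = algebraMap R A r • (a • x)
    rw [Algebra.smul_def, mul_smul]⟩
  obtain ⟨s, hs⟩ := Module.projective_def'.1 h1
  have h2 : Module.Projective R X := Module.Projective.of_split (s.restrictScalars R)
    ((Finsupp.linearCombination A (id : X → X)).restrictScalars R) (by
      ext x
      exact LinearMap.congr_fun hs x)
  exact (IsProjective.iff_projective (R := R) ((ModuleCat.restrictScalars (algebraMap R A)).obj X)).1 h2

noncomputable def homologyRestrict (M : CochainComplex (ModuleCat.{u} B) ℤ) (p : ℤ) :
    ((((ModuleCat.restrictScalars π : ModuleCat.{u} B ⥤ ModuleCat.{u} A).mapHomologicalComplex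
              (ComplexShape.up ℤ)).obj M).homology p) ≅ (ModuleCat.restrictScalars π).obj (M.homology p) :=
  (M.sc p).mapHomologyIso (ModuleCat.restrictScalars π)

end asm
end part10

section part11
section asm2
variable {R A S : Type u} [CommRing R] [CommRing A] [CommRing S] [Algebra R A] [Module.Free R A] (π : A →+* S)
  (ρ : R →+* S)

lemma exists_K (hρ : ρ = π.comp (algebraMap R A)) (M : CochainComplex (ModuleCat.{u} S) ℤ) (b : ℤ)
    (hb : ∀ i : ℤ, b < i → IsZero (M.homology i)) :
    ∃ K : CochainComplex (ModuleCat.{u} A) ℤ, (∀ n, Projective (K.X n)) ∧ K.IsStrictlyLE b ∧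
      (∀ p, Nonempty (K.homology p ≅ (ModuleCat.restrictScalars π).obj (M.homology p))) ∧
      ∃ g : ((ModuleCat.restrictScalars (algebraMap R A) : ModuleCat.{u} A ⥤ ModuleCat.{u} R).mapHomologicalComplex
              (ComplexShape.up ℤ)).obj K ⟶
           ((ModuleCat.restrictScalars ρ : ModuleCat.{u} S ⥤ ModuleCat.{u} R).mapHomologicalComplex
              (ComplexShape.up ℤ)).obj M, QuasiIso g := by
  let M' : CochainComplex (ModuleCat.{u} A) ℤ := ((ModuleCat.restrictScalars π : ModuleCat.{u} S ⥤ ModuleCat.{u} A).mapHomologicalComplex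
              (ComplexShape.up ℤ)).obj M
  have hM' : M'.IsLE b := by
    rw [CochainComplex.isLE_iff]
    intro i hi
    rw [HomologicalComplex.exactAt_iff_isZero_homology]
    exact ((ModuleCat.restrictScalars π).map_isZero (hb i hi)).of_iso (homologyRestrict π M i)
  obtain ⟨K, f, hf, hK, hKb⟩ := exists_proj_res M' b
  refine ⟨K, hK, hKb, fun p => ⟨isoOfQuasiIsoAt f p ≪≫ homologyRestrict π M p⟩, ?_⟩
  let G := (ModuleCat.restrictScalars (algebraMap R A) : ModuleCat.{u} A ⥤ ModuleCat.{u} R)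
  let e := (NatIso.mapHomologicalComplex (ModuleCat.restrictScalarsComp' (algebraMap R A) π ρ hρ) (ComplexShape.up ℤ)).app M
  let g1 : (G.mapHomologicalComplex (ComplexShape.up ℤ)).obj K ⟶ (G.mapHomologicalComplex (ComplexShape.up ℤ)).obj M' :=
    (G.mapHomologicalComplex (ComplexShape.up ℤ)).map f
  have h1 : QuasiIso g1 := inferInstance
  let g2 : (G.mapHomologicalComplex (ComplexShape.up ℤ)).obj M' ⟶
      ((ModuleCat.restrictScalars ρ : ModuleCat.{u} S ⥤ ModuleCat.{u} R).mapHomologicalComplex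
              (ComplexShape.up ℤ)).obj M := e.inv
  have h3 : IsIso g2 := inferInstanceAs (IsIso e.inv)
  exact ⟨g1 ≫ g2, quasiIso_comp g1 g2⟩

@[reducible] def resMod (R : Type u) {A : Type u} [CommRing R] [CommRing A] [Algebra R A] (X : Type u) [AddCommGroup X] [Module A X] :
    Module R X := Module.compHom X (algebraMap R A)

lemma bridge [HasDerivedCategory (ModuleCat.{u} R)] (MR : CochainComplex (ModuleCat.{u} R) ℤ)
    (K : CochainComplex (ModuleCat.{u} A) ℤ) (hK : ∀ n, Projective (K.X n)) (b : ℤ) (hb : K.IsStrictlyLE b)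
    (g : ((ModuleCat.restrictScalars (algebraMap R A) : ModuleCat.{u} A ⥤ ModuleCat.{u} R).mapHomologicalComplex
              (ComplexShape.up ℤ)).obj K ⟶ MR) (hg : QuasiIso g)
    (N : Type u) [AddCommGroup N] [Module R N] (i : ℤ)
    (p' p p'' : ℤ) (hp : p + i = 0) (hp' : p' + 1 = p) (hp'' : p + 1 = p'') :
    Subsingleton ((DerivedCategory.Q.obj MR) ⟶ (((DerivedCategory.singleFunctor _ 0).obj (ModuleCat.of R N))⟦i⟧)) ↔
    ExAt (R := R) (N := N) 
      ((ModuleCat.restrictScalars (algebraMap R A)).map (K.d p' p)).hom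
      ((ModuleCat.restrictScalars (algebraMap R A)).map (K.d p p'')).hom := by
  let KR : CochainComplex (ModuleCat.{u} R) ℤ := 
    ((ModuleCat.restrictScalars (algebraMap R A) : ModuleCat.{u} A ⥤ ModuleCat.{u} R).mapHomologicalComplex
              (ComplexShape.up ℤ)).obj K
  have h1 : ∀ n, Projective (KR.X n) := fun n => projective_restrict (K.X n)
  have h2 : KR.IsStrictlyLE b := by
    rw [CochainComplex.isStrictlyLE_iff]
    intro i hi
    exact (ModuleCat.restrictScalars (algebraMap R A)).map_isZero (K.isZero_of_isStrictlyLE b i hi)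
  have h3 : KR.IsKProjective := CochainComplex.isKProjective_of_projective KR b
  have : QuasiIso (K := KR) g := hg
  rw [derHom_subsingleton_iff MR KR g (ModuleCat.of R N) i p' p p'' hp hp' hp'']
  constructor
  · intro H h hh
    obtain ⟨k, hk⟩ := H (ModuleCat.ofHom (X := KR.X p) h) (by ext x; exact LinearMap.congr_fun hh x)
    exact ⟨k.hom, congrArg ModuleCat.Hom.hom hk⟩
  · intro H h hh
    obtain ⟨k, hk⟩ := H h.hom (by
      have := congrArg ModuleCat.Hom.hom hh
      exact this)
    exact ⟨ModuleCat.ofHom (X := KR.X p'') k, by ext x; exact LinearMap.congr_fun hk x⟩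

end asm2
end part11

/-- Let `R → S` be a local homomorphism of Noetherian local rings, `M` a
homologically finite `S`-complex, and `φ : R → R` a contracting endomorphism.  If for
infinitely many `n` there is `t_n > sup M` with `Ext^i_R(M, ^nR) = 0` for
`t_n ≤ i ≤ t_n + depth R`, then `pd_R M < ∞`. -/
theorem finite_projective_dimension_of_ext_vanishing
    {R S : Type u} [CommRing R] [CommRing S] [IsNoetherianRing R] [IsNoetherianRing S]
    [IsLocalRing R] [IsLocalRing S]
    [HasDerivedCategory (ModuleCat.{u} R)]
    (ρ : R →+* S) [IsLocalHom ρ]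
    (φ : R →+* R) [IsLocalHom φ]
    (hcontr : ∃ N₀ : ℕ, ∀ n : ℕ, N₀ ≤ n → ∀ x ∈ maximalIdeal R,
      (φ ^ n) x ∈ (maximalIdeal R) ^ 2)
    (M : CochainComplex (ModuleCat.{u} S) ℤ)
    (hbdd : ∃ a b : ℤ, ∀ i : ℤ, (i < a ∨ b < i) → IsZero (M.homology i))
    (hfin : ∀ i : ℤ, Module.Finite S ↥(M.homology i))
    (hext : {n : ℕ | ∃ t : ℤ,
      (∀ i : ℤ, t ≤ i → IsZero (M.homology (-i))) ∧
      (∀ i : ℤ, t ≤ i → i ≤ t + (depthNat R : ℤ) →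
        (letI : Module R R := Module.compHom R (φ ^ n);
          Subsingleton (hyperExt R
            (((ModuleCat.restrictScalars ρ : ModuleCat.{u} S ⥤ ModuleCat.{u} R).mapHomologicalComplex
              (ComplexShape.up ℤ)).obj M)
            (ModuleCat.of R R) i)))}.Infinite) :
    ∃ d : ℤ, ∀ (N : ModuleCat.{u} R) (i : ℤ), d < i →
      Subsingleton (hyperExt R
        (((ModuleCat.restrictScalars ρ : ModuleCat.{u} S ⥤ ModuleCat.{u} R).mapHomologicalComplex
          (ComplexShape.up ℤ)).obj M) N i) := by
  obtain ⟨A, _, _, _, π, hρ, hπ⟩ : ∃ (A : Type u) (_ : CommRing A) (_ : Algebra R A) (_ : Module.Free R A)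
      (π : A →+* S), ρ = π.comp (algebraMap R A) ∧ Function.Surjective π := by
    refine ⟨MvPolynomial S R, inferInstance, inferInstance, inferInstance,
      MvPolynomial.eval₂Hom ρ (id : S → S), ?_, fun s => ⟨MvPolynomial.X s, ?_⟩⟩
    · ext x
      simp [MvPolynomial.algebraMap_eq]
    · rw [MvPolynomial.coe_eval₂Hom, MvPolynomial.eval₂_X]; rfl
  obtain ⟨_, b, hab⟩ := hbdd
  obtain ⟨K, hK, hKb, hKH, g, hg⟩ := exists_K (R := R) (A := A) π ρ hρ M b (fun i hi => hab i (Or.inr hi))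
  obtain ⟨r, I, z, hI, hzI, hz⟩ := exists_RegI (R := R)
  have hr : r ≤ depthNat R := le_depthNat r I z hI hzI hz
  obtain ⟨N, hN1, hzN⟩ := exists_not_mem_pow I z hzI
  obtain ⟨n0, hn0⟩ := contracting_pow φ hcontr N
  obtain ⟨n, ⟨t, ht0, ht⟩, hn⟩ := hext.exists_gt n0
  let i0 : ℤ := min (t - 1) (-b - 2)
  have hi0t : i0 ≤ t - 1 := min_le_left _ _
  have hi0b : i0 ≤ -b - 2 := min_le_right _ _
  obtain ⟨s, hs⟩ : ∃ s : ℕ, (s : ℤ) = t - 1 - i0 := ⟨(t - 1 - i0).toNat, by omega⟩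
  clear_value i0
  let P : ℕ → Type u := fun j => K.X (-(i0 + (j : ℤ)))
  let iA : ∀ j, Module A (P j) := fun j => (K.X (-(i0 + (j : ℤ)))).isModule
  let iR : ∀ j, Module R (P j) := fun j => resMod R (A := A) (P j)
  have iT : ∀ j, IsScalarTower R A (P j) := fun j => ⟨fun r a x => by
    change (r • a) • x = algebraMap R A r • (a • x)
    rw [Algebra.smul_def, mul_smul]⟩
  have iP : ∀ j, Module.Projective R (P j) := fun j => by
    have := hK (-(i0 + (j : ℤ)))
    have h1 := projective_restrict (R := R) (K.X (-(i0 + (j : ℤ))))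
    have h2 := (IsProjective.iff_projective (R := R) ((ModuleCat.restrictScalars (algebraMap R A)).obj (K.X (-(i0 + (j : ℤ)))))).2 h1
    exact h2
  let d : ∀ j, P (j+1) →ₗ[A] P j := fun j => (K.d (-(i0 + ((j+1 : ℕ) : ℤ))) (-(i0 + (j : ℤ)))).hom
  have hdd : ∀ j x, d j (d (j+1) x) = 0 := fun j x => by
    have := K.d_comp_d (-(i0 + ((j+1+1 : ℕ) : ℤ))) (-(i0 + ((j+1 : ℕ) : ℤ))) (-(i0 + (j : ℤ)))
    exact LinearMap.congr_fun (congrArg ModuleCat.Hom.hom this) x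
  have hbr : ∀ (X : Type u) [AddCommGroup X] [Module R X] (j : ℕ), Subsingleton (hyperExt R
        (((ModuleCat.restrictScalars ρ : ModuleCat.{u} S ⥤ ModuleCat.{u} R).mapHomologicalComplex
          (ComplexShape.up ℤ)).obj M) (ModuleCat.of R X) (i0 + ((j + 1 : ℕ) : ℤ))) ↔
        ExAt ((d (j+1)).restrictScalars R) ((d j).restrictScalars R) X := by
    intro X _ _ j
    exact bridge _ K hK b hKb g hg X (i0 + ((j + 1 : ℕ) : ℤ)) (-(i0 + ((j+1+1 : ℕ) : ℤ))) (-(i0 + ((j+1 : ℕ) : ℤ)))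
      (-(i0 + (j : ℤ))) (by omega) (by push_cast; omega) (by push_cast; omega)
  have h1 : ∀ j ≤ r, ExAt ((d (s+j+1)).restrictScalars R) ((d (s+j)).restrictScalars R) (Tw (φ ^ n) R) := by
    intro j hj
    rw [← hbr (Tw (φ ^ n) R) (s + j)]
    exact ht (i0 + ((s + j + 1 : ℕ) : ℤ)) (by push_cast; omega) (by push_cast; omega)
  have h2 := hI.reduce P (fun j => (d j).restrictScalars R) hdd (φ ^ n) s h1
  have h3 := residue_of_Tw (φ ^ n) I z hz N hN1 (hn0 n hn.le) hzN h2
  obtain ⟨D, hD⟩ := ExAt_of_residue (R := R) π P d hπ (fun x hx => by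
      have : π (algebraMap R A x) = ρ x := by rw [hρ]; rfl
      rw [this]
      exact fun h => hx (isUnit_of_map_unit ρ x h)) hdd
    (by
      have := ModuleCat.subsingleton_of_isZero (K.isZero_of_isStrictlyLE b (-(i0 + ((1 : ℕ) : ℤ))) (by push_cast; omega))
      exact this)
    (fun j => by
      obtain ⟨e⟩ := hKH (-(i0 + ((j+1 : ℕ) : ℤ)))
      have hf := hfin (-(i0 + ((j+1 : ℕ) : ℤ)))
      have hn : IsNoetherian S (M.homology (-(i0 + ((j+1 : ℕ) : ℤ)))) := isNoetherian_of_isNoetherianRing_of_finite S _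
      have hn2 := noeth_restrict π hπ (M.homology (-(i0 + ((j+1 : ℕ) : ℤ))))
      refine goodSQ_complex π K (-(i0 + ((j+1+1 : ℕ) : ℤ))) (-(i0 + ((j+1 : ℕ) : ℤ)))
        (-(i0 + (j : ℤ))) (by push_cast; omega) (by push_cast; omega) 
        (isNoetherian_of_linearEquiv e.toLinearEquiv.symm) ?_
      intro a ha y
      apply e.toLinearEquiv.injective
      rw [map_smul, map_zero]
      generalize e.toLinearEquiv y = w
      change (π a • (show M.homology (-(i0 + ((j+1 : ℕ) : ℤ))) from w)) = 0
      rw [ha, zero_smul])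
    s h3
    (fun j hj => by
      obtain ⟨e⟩ := hKH (-(i0 + ((j+1 : ℕ) : ℤ)))
      refine exact_complex K (-(i0 + ((j+1+1 : ℕ) : ℤ))) (-(i0 + ((j+1 : ℕ) : ℤ)))
        (-(i0 + (j : ℤ))) (by push_cast; omega) (by push_cast; omega) ?_
      exact ((ModuleCat.restrictScalars π).map_isZero (ht0 _ (by push_cast; omega))).of_iso e)
  refine ⟨i0 + D, fun X i hi => ?_⟩
  obtain ⟨j, hj⟩ : ∃ j : ℕ, (j : ℤ) = i - i0 - 1 := ⟨(i - i0 - 1).toNat, by omega⟩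
  obtain rfl : i = i0 + ((j + 1 : ℕ) : ℤ) := by push_cast; omega
  exact (hbr X j).2 (hD j (by omega) X)
end
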